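/- Let u(y,t) = ∫_{ℝⁿ} K(y,z,t) u₀(z) dz, where K is the Euclidean heat kernel on ℝⁿ and u₀ : ℝⁿ → ℝ is continuous, compactly supported, nonnegative, and not identically zero. Define f(y,t) = -log u(y,t) - (n/2) log(4πt), so u = (4πt)^{-n/2} e^{-f}, and set W = t( 2Δf - ‖∇f‖² ) + f - n. Fix x₀ ∈ ℝⁿ and t₀ > 0, write τ = t₀ - t, and let Ĥ(y,t) = (4πτ)^{-n/2} exp(-‖x₀-y‖²/(4τ)) for 0 < t < t₀. Then the function t ↦ ∫_{ℝⁿ} (-W(y,t)) u(y,t) Ĥ(y,t) dy is differentiable on (0,t₀) and d/dt ∫_{ℝⁿ} (-W) u Ĥ dy = 2t ∫_{ℝⁿ} ‖ ∇²f - (1/(2t)) I ‖²_F u Ĥ dy ≥ 0. -/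

import Mathlib

open Real MeasureTheory Filter Set

/-- The Euclidean heat kernel on ℝⁿ. -/
noncomputable def heatK (n : ℕ) (x y : EuclideanSpace ℝ (Fin n)) (t : ℝ) : ℝ :=
  (4 * π * t) ^ (-(n : ℝ) / 2) * Real.exp (-‖x - y‖ ^ 2 / (4 * t))

/-- `i`-th partial derivative of `f : ℝⁿ → ℝ`. -/
noncomputable def pdv {n : ℕ} (i : Fin n) (f : EuclideanSpace ℝ (Fin n) → ℝ)
    (y : EuclideanSpace ℝ (Fin n)) : ℝ :=
  fderiv ℝ f y (EuclideanSpace.single i 1)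

/-- `(i,j)` entry of the Hessian of `f : ℝⁿ → ℝ`. -/
noncomputable def hess {n : ℕ} (i j : Fin n) (f : EuclideanSpace ℝ (Fin n) → ℝ)
    (y : EuclideanSpace ℝ (Fin n)) : ℝ :=
  pdv i (pdv j f) y

/-- Euclidean Laplacian (trace of the Hessian) of `f : ℝⁿ → ℝ`. -/
noncomputable def lap {n : ℕ} (f : EuclideanSpace ℝ (Fin n) → ℝ)
    (y : EuclideanSpace ℝ (Fin n)) : ℝ :=
  ∑ i, hess i i f y

/-!
In the self-similar variables `x = y / (2t)`, `s = 1 / (4t)` one has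
`u(y, t) = (4πt)^{-n/2} exp(-‖y‖²/(4t)) Z(x, s)`, where
`Z(x, s) = ∫ exp(⟪z, x⟫ - s‖z‖²) u₀(z) dz` solves the *backward* heat equation `(∂ₛ + Δ) Z = 0`.
Hence `f(y, t) = ‖y‖²/(4t) - log Z(x, s)` and `∇²f - I/(2t) = -(2t)⁻² ∇² log Z`. Completing the
square turns `u Ĥ dy` into a constant times `Z K(x, x₀/(2t₀), r) dx` with `r = 1/(4t) - 1/(4t₀)`,
and `-W Z` into a density `e(x, s)` built from `Z` and its first two derivatives. Since
`d/dr ∫ e(x, 1/(4t₀) + r) K(x, x₁, r) dx = ∫ (∂ₛ + Δ)e K dx`, everything reduces to the pointwise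
identity `(∂ₛ + Δ) e = -2s Z ‖∇² log Z‖²`, which follows from the product rule for `∂ₛ + Δ` and the
fact that the spatial derivatives of `Z` are again solutions.
-/
/-- Continuity in space together with a bound `C * exp (C * ‖x‖)` that is uniform for time in
bounded intervals: the growth class in which all integrals against heat kernels converge. -/
structure HasExpGrowth {E : Type*} [SeminormedAddCommGroup E] (h : E → ℝ → ℝ) : Prop where
  continuous : ∀ s, Continuous fun x => h x s
  exists_bound : ∀ M : ℝ, ∃ C, 0 ≤ C ∧ ∀ x s, |s| ≤ M → |h x s| ≤ C * rexp (C * ‖x‖)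

namespace HasExpGrowth

section SeminormedAddCommGroup

variable {E : Type*} [SeminormedAddCommGroup E] {h g : E → ℝ → ℝ}

lemma of_abs_le (hg : HasExpGrowth g) (hc : ∀ s, Continuous fun x => h x s)
    (hle : ∀ x s, |h x s| ≤ |g x s|) : HasExpGrowth h :=
  ⟨hc, fun M => (hg.exists_bound M).imp fun _ hC =>
    ⟨hC.1, fun x s hs => (hle x s).trans (hC.2 x s hs)⟩⟩

lemma of_bound (hc : ∀ s, Continuous fun x => h x s)
    (hb : ∀ M : ℝ, ∃ A B, ∀ x s, |s| ≤ M → |h x s| ≤ A * rexp (B * ‖x‖)) : HasExpGrowth h := by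
  refine ⟨hc, fun M => ?_⟩
  obtain ⟨A, B, hAB⟩ := hb M
  refine ⟨|A| + |B|, by positivity, fun x s hs => (hAB x s hs).trans ?_⟩
  gcongr
  · exact (le_abs_self A).trans (le_add_of_nonneg_right (abs_nonneg B))
  · exact (le_abs_self B).trans (le_add_of_nonneg_left (abs_nonneg A))

lemma of_time {c : ℝ → ℝ} (hc : Continuous c) : HasExpGrowth fun (_ : E) s => c s := by
  refine of_bound (fun _ => continuous_const) fun M => ?_
  obtain ⟨C, hC⟩ := isCompact_Icc.exists_bound_of_continuousOn (s := Icc (-M) M) hc.continuousOn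
  exact ⟨C, 0, fun _ s hs => by simpa using hC s (abs_le.1 hs)⟩

lemma const (c : ℝ) : HasExpGrowth fun (_ : E) _ => c :=
  of_time continuous_const

lemma exp_norm (C : ℝ) : HasExpGrowth fun (x : E) _ => C * rexp (C * ‖x‖) :=
  of_bound (fun _ => by fun_prop) fun _ => ⟨|C|, C, fun x _ _ => by rw [abs_mul, abs_exp]⟩

lemma norm : HasExpGrowth fun (x : E) _ => ‖x‖ := by
  refine (exp_norm 1).of_abs_le (fun _ => by fun_prop) fun x _ => ?_
  rw [abs_norm, one_mul, one_mul, abs_exp]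
  linarith [add_one_le_exp ‖x‖]

lemma add (hh : HasExpGrowth h) (hg : HasExpGrowth g) : HasExpGrowth (h + g) := by
  refine ⟨fun s => (hh.continuous s).add (hg.continuous s), fun M => ?_⟩
  obtain ⟨C, hC, hhC⟩ := hh.exists_bound M
  obtain ⟨D, hD, hgD⟩ := hg.exists_bound M
  refine ⟨C + D, by positivity, fun x s hs => ?_⟩
  calc |h x s + g x s| ≤ |h x s| + |g x s| := abs_add_le _ _
    _ ≤ C * rexp (C * ‖x‖) + D * rexp (D * ‖x‖) := add_le_add (hhC x s hs) (hgD x s hs)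
    _ ≤ C * rexp ((C + D) * ‖x‖) + D * rexp ((C + D) * ‖x‖) := by gcongr <;> linarith
    _ = (C + D) * rexp ((C + D) * ‖x‖) := by ring

lemma mul (hh : HasExpGrowth h) (hg : HasExpGrowth g) : HasExpGrowth (h * g) := by
  refine ⟨fun s => (hh.continuous s).mul (hg.continuous s), fun M => ?_⟩
  obtain ⟨C, hC, hhC⟩ := hh.exists_bound M
  obtain ⟨D, hD, hgD⟩ := hg.exists_bound M
  refine ⟨C * D + (C + D), by positivity, fun x s hs => ?_⟩
  calc |h x s * g x s| = |h x s| * |g x s| := abs_mul _ _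
    _ ≤ C * rexp (C * ‖x‖) * (D * rexp (D * ‖x‖)) :=
        mul_le_mul (hhC x s hs) (hgD x s hs) (abs_nonneg _) (by positivity)
    _ = C * D * rexp ((C + D) * ‖x‖) := by rw [add_mul, Real.exp_add]; ring
    _ ≤ (C * D + (C + D)) * rexp ((C * D + (C + D)) * ‖x‖) := by
        have : 0 ≤ C * D := by positivity
        gcongr ?_ * rexp (?_ * _) <;> linarith

lemma neg (hh : HasExpGrowth h) : HasExpGrowth (-h) :=
  hh.of_abs_le (fun s => (hh.continuous s).neg) fun _ _ => (abs_neg _).le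

lemma sum {ι : Type*} (S : Finset ι) {h : ι → E → ℝ → ℝ} (hh : ∀ i, HasExpGrowth (h i)) :
    HasExpGrowth (∑ i ∈ S, h i) :=
  Finset.sum_induction h HasExpGrowth (fun _ _ => add) (const 0) fun i _ => hh i

lemma log (hh : HasExpGrowth h) (hinv : HasExpGrowth h⁻¹) (hpos : ∀ x s, 0 < h x s) :
    HasExpGrowth fun x s => Real.log (h x s) := by
  refine (hh.add hinv).of_abs_le
    (fun s => (hh.continuous s).log fun x => (hpos x s).ne') fun x s => ?_
  have hle : Real.log (h x s) ≤ h x s - 1 := log_le_sub_one_of_pos (hpos x s)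
  have hge : 1 - (h x s)⁻¹ ≤ Real.log (h x s) := one_sub_inv_le_log_of_pos (hpos x s)
  have hx : 0 < h x s := hpos x s
  have hx' : 0 < (h x s)⁻¹ := inv_pos.2 hx
  change _ ≤ |h x s + (h x s)⁻¹|
  rw [abs_of_pos (add_pos hx hx'), abs_le]
  constructor <;> linarith

lemma norm_sub (x₀ : E) : HasExpGrowth fun (x : E) _ => ‖x - x₀‖ :=
  (norm.add (const ‖x₀‖)).of_abs_le (fun _ => by fun_prop) fun x _ => by
    rw [abs_norm]; exact (norm_sub_le x x₀).trans (le_abs_self _)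

lemma norm_sub_sq_div_add (x₀ : E) (a b : ℝ) :
    HasExpGrowth fun (x : E) _ => ‖x - x₀‖ ^ 2 / a + b := by
  convert (((norm_sub x₀).mul (norm_sub x₀)).mul (const a⁻¹)).add (const b) using 3
  simp only [Pi.mul_apply, Pi.add_apply]; ring

end SeminormedAddCommGroup

section Integrable

variable {E : Type*} [NormedAddCommGroup E] [InnerProductSpace ℝ E] [FiniteDimensional ℝ E]
  [MeasurableSpace E] [BorelSpace E]

lemma integrable_mul_exp_neg {h : E → ℝ → ℝ} (hh : HasExpGrowth h) (s : ℝ) (x₀ : E) {c : ℝ}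
    (hc : 0 < c) : Integrable fun x => h x s * rexp (-c * ‖x - x₀‖ ^ 2) := by
  obtain ⟨C, hC, hb⟩ := hh.exists_bound |s|
  have hgauss : Integrable fun x : E => rexp (-(c / 2) * ‖x‖ ^ 2) :=
    .of_integral_ne_zero <| by
      rw [GaussianFourier.integral_rexp_neg_mul_sq_norm (half_pos hc)]; positivity
  refine ((hgauss.comp_sub_right x₀).const_mul (C * rexp (C * ‖x₀‖ + C ^ 2 / (2 * c)))).mono'
    ((hh.continuous s).mul (by fun_prop)).aestronglyMeasurable (ae_of_all _ fun x => ?_)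
  rw [norm_mul, norm_eq_abs, norm_eq_abs, abs_exp]
  have hsquare : C * ‖x - x₀‖ ≤ C ^ 2 / (2 * c) + c / 2 * ‖x - x₀‖ ^ 2 := by
    have hsub : C ^ 2 / (2 * c) + c / 2 * ‖x - x₀‖ ^ 2 - C * ‖x - x₀‖
        = (c * ‖x - x₀‖ - C) ^ 2 / (2 * c) := by field_simp; ring
    have : 0 ≤ (c * ‖x - x₀‖ - C) ^ 2 / (2 * c) := by positivity
    linarith
  have htri : C * ‖x‖ ≤ C * (‖x - x₀‖ + ‖x₀‖) := by
    gcongr; exact norm_le_norm_sub_add x x₀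
  calc |h x s| * rexp (-c * ‖x - x₀‖ ^ 2)
      ≤ C * rexp (C * ‖x‖) * rexp (-c * ‖x - x₀‖ ^ 2) := by gcongr; exact hb x s le_rfl
    _ = C * rexp (C * ‖x‖ + -c * ‖x - x₀‖ ^ 2) := by rw [Real.exp_add]; ring
    _ ≤ C * rexp (C * ‖x₀‖ + C ^ 2 / (2 * c) + -(c / 2) * ‖x - x₀‖ ^ 2) := by
        gcongr C * rexp ?_; linarith
    _ = C * rexp (C * ‖x₀‖ + C ^ 2 / (2 * c)) * rexp (-(c / 2) * ‖x - x₀‖ ^ 2) := by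
        rw [Real.exp_add]; ring

end Integrable

end HasExpGrowth

section PartialDerivatives

variable {n : ℕ} {f g : EuclideanSpace ℝ (Fin n) → ℝ} {x : EuclideanSpace ℝ (Fin n)} {k : Fin n}

lemma pdv_const (c : ℝ) : pdv k (fun _ => c) x = 0 := by
  simp [pdv]

lemma pdv_coord (j : Fin n) : pdv k (fun y => y j) x = if j = k then 1 else 0 := by
  change fderiv ℝ (EuclideanSpace.proj (𝕜 := ℝ) j) x (EuclideanSpace.single k 1) = _
  rw [ContinuousLinearMap.fderiv]
  simp

lemma pdv_add (hf : DifferentiableAt ℝ f x) (hg : DifferentiableAt ℝ g x) :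
    pdv k (fun y => f y + g y) x = pdv k f x + pdv k g x := by
  simp [pdv, fderiv_fun_add hf hg]

lemma pdv_sub (hf : DifferentiableAt ℝ f x) (hg : DifferentiableAt ℝ g x) :
    pdv k (fun y => f y - g y) x = pdv k f x - pdv k g x := by
  simp [pdv, fderiv_fun_sub hf hg]

lemma pdv_mul (hf : DifferentiableAt ℝ f x) (hg : DifferentiableAt ℝ g x) :
    pdv k (fun y => f y * g y) x = pdv k f x * g x + f x * pdv k g x := by
  simp only [pdv, fderiv_fun_mul hf hg, add_apply, smul_apply, smul_eq_mul]
  ring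

lemma pdv_const_mul (hf : DifferentiableAt ℝ f x) (c : ℝ) :
    pdv k (fun y => c * f y) x = c * pdv k f x := by
  simp [pdv, fderiv_const_mul hf]

lemma pdv_comp {φ : ℝ → ℝ} {φ' : ℝ} (hφ : HasDerivAt φ φ' (f x)) (hf : DifferentiableAt ℝ f x) :
    pdv k (fun y => φ (f y)) x = φ' * pdv k f x := by
  change fderiv ℝ (φ ∘ f) x _ = _
  rw [(hφ.comp_hasFDerivAt x hf.hasFDerivAt).fderiv]
  rfl

lemma pdv_comp_smul (c : ℝ) : pdv k (fun y => f (c • y)) x = c * pdv k f (c • x) := by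
  simp [pdv, fderiv_comp_smul]

lemma pdv_norm_sub_sq (x₀ : EuclideanSpace ℝ (Fin n)) :
    pdv k (fun y => ‖y - x₀‖ ^ 2) x = 2 * (x k - x₀ k) := by
  rw [pdv, fderiv_comp_sub (f := fun y => ‖y‖ ^ 2) x₀, fderiv_norm_sq_apply]
  simp [EuclideanSpace.inner_single_right]

lemma norm_gradient_sq : ‖gradient f x‖ ^ 2 = ∑ j, pdv j f x ^ 2 := by
  rw [EuclideanSpace.real_norm_sq_eq]
  refine Finset.sum_congr rfl fun j _ => ?_
  have : inner ℝ (gradient f x) (EuclideanSpace.single j 1) = pdv j f x := by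
    simp [gradient, pdv]
  rw [← this, EuclideanSpace.inner_single_right]
  simp

end PartialDerivatives

/-- The spatial partial derivative `∂ₖ h` of a function of space and time. -/
noncomputable def spaceDeriv {n : ℕ} (k : Fin n) (h : EuclideanSpace ℝ (Fin n) → ℝ → ℝ) :
    EuclideanSpace ℝ (Fin n) → ℝ → ℝ :=
  fun x s => pdv k (fun y => h y s) x

/-- The time derivative `∂ₛ h` of a function of space and time. -/
noncomputable def timeDeriv {E : Type*} (h : E → ℝ → ℝ) : E → ℝ → ℝ :=
  fun x s => deriv (h x) s

/-- The backward heat operator `∂ₛ + Δ`. -/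
noncomputable def backwardHeat {n : ℕ} (h : EuclideanSpace ℝ (Fin n) → ℝ → ℝ) :
    EuclideanSpace ℝ (Fin n) → ℝ → ℝ :=
  timeDeriv h + ∑ k, spaceDeriv k (spaceDeriv k h)

/-- Functions that are differentiable in space and have exponential growth together with their
spatial gradient. -/
structure HasExpGrowthGrad {n : ℕ} (h : EuclideanSpace ℝ (Fin n) → ℝ → ℝ) : Prop where
  hasExpGrowth : HasExpGrowth h
  differentiable : ∀ s, Differentiable ℝ fun x => h x s
  hasExpGrowth_spaceDeriv : ∀ k, HasExpGrowth (spaceDeriv k h)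

section SpaceTime

variable {n : ℕ} {h g : EuclideanSpace ℝ (Fin n) → ℝ → ℝ}

namespace HasExpGrowthGrad

lemma of_spaceDeriv_eq {g : Fin n → EuclideanSpace ℝ (Fin n) → ℝ → ℝ} (hh : HasExpGrowth h)
    (hd : ∀ s, Differentiable ℝ fun x => h x s) (hderiv : ∀ k, spaceDeriv k h = g k)
    (hg : ∀ k, HasExpGrowth (g k)) : HasExpGrowthGrad h :=
  ⟨hh, hd, fun k => hderiv k ▸ hg k⟩

lemma of_time {c : ℝ → ℝ} (hc : Continuous c) :
    HasExpGrowthGrad fun (_ : EuclideanSpace ℝ (Fin n)) s => c s :=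
  of_spaceDeriv_eq (.of_time hc) (fun _ => differentiable_const _)
    (fun _ => funext₂ fun _ _ => pdv_const _) fun _ => .const 0

lemma const (c : ℝ) : HasExpGrowthGrad fun (_ : EuclideanSpace ℝ (Fin n)) _ => c :=
  of_time continuous_const

lemma coord (j : Fin n) : HasExpGrowthGrad fun (x : EuclideanSpace ℝ (Fin n)) _ => x j :=
  of_spaceDeriv_eq
    (HasExpGrowth.norm.of_abs_le (fun _ => by fun_prop) fun x _ => by
      rw [abs_norm]; exact PiLp.norm_apply_le x j)
    (fun _ => by fun_prop) (fun _ => funext₂ fun _ _ => pdv_coord j) fun _ => .const _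

lemma spaceDeriv_add (hh : HasExpGrowthGrad h) (hg : HasExpGrowthGrad g) (k : Fin n) :
    spaceDeriv k (h + g) = spaceDeriv k h + spaceDeriv k g :=
  funext₂ fun x s => pdv_add (hh.differentiable s x) (hg.differentiable s x)

lemma spaceDeriv_mul (hh : HasExpGrowthGrad h) (hg : HasExpGrowthGrad g) (k : Fin n) :
    spaceDeriv k (h * g) = spaceDeriv k h * g + h * spaceDeriv k g :=
  funext₂ fun x s => pdv_mul (hh.differentiable s x) (hg.differentiable s x)

lemma spaceDeriv_inv (hh : HasExpGrowthGrad h) (hne : ∀ x s, h x s ≠ 0) (k : Fin n) :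
    spaceDeriv k h⁻¹ = -(spaceDeriv k h * (h⁻¹ * h⁻¹)) :=
  funext₂ fun x s =>
    (pdv_comp (hasDerivAt_inv (hne x s)) (hh.differentiable s x)).trans <| by
      simp only [Pi.neg_apply, Pi.mul_apply, Pi.inv_apply, spaceDeriv]; ring

lemma spaceDeriv_log (hh : HasExpGrowthGrad h) (hne : ∀ x s, h x s ≠ 0) (k : Fin n) :
    spaceDeriv k (fun x s => Real.log (h x s)) = spaceDeriv k h * h⁻¹ :=
  funext₂ fun x s =>
    (pdv_comp (hasDerivAt_log (hne x s)) (hh.differentiable s x)).trans (mul_comm _ _)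

lemma add (hh : HasExpGrowthGrad h) (hg : HasExpGrowthGrad g) : HasExpGrowthGrad (h + g) :=
  of_spaceDeriv_eq (hh.hasExpGrowth.add hg.hasExpGrowth)
    (fun s => (hh.differentiable s).add (hg.differentiable s)) (hh.spaceDeriv_add hg)
    fun k => (hh.hasExpGrowth_spaceDeriv k).add (hg.hasExpGrowth_spaceDeriv k)

lemma mul (hh : HasExpGrowthGrad h) (hg : HasExpGrowthGrad g) : HasExpGrowthGrad (h * g) :=
  of_spaceDeriv_eq (hh.hasExpGrowth.mul hg.hasExpGrowth)
    (fun s => (hh.differentiable s).mul (hg.differentiable s)) (hh.spaceDeriv_mul hg)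
    fun k => ((hh.hasExpGrowth_spaceDeriv k).mul hg.hasExpGrowth).add
      (hh.hasExpGrowth.mul (hg.hasExpGrowth_spaceDeriv k))

lemma neg (hh : HasExpGrowthGrad h) : HasExpGrowthGrad (-h) :=
  neg_one_mul h ▸ (const (-1)).mul hh

lemma inv (hh : HasExpGrowthGrad h) (hinv : HasExpGrowth h⁻¹) (hne : ∀ x s, h x s ≠ 0) :
    HasExpGrowthGrad h⁻¹ :=
  of_spaceDeriv_eq hinv (fun s x => (hh.differentiable s x).inv (hne x s)) (hh.spaceDeriv_inv hne)
    fun k => ((hh.hasExpGrowth_spaceDeriv k).mul (hinv.mul hinv)).neg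

lemma log (hh : HasExpGrowthGrad h) (hinv : HasExpGrowth h⁻¹) (hpos : ∀ x s, 0 < h x s) :
    HasExpGrowthGrad fun x s => Real.log (h x s) :=
  of_spaceDeriv_eq (hh.hasExpGrowth.log hinv hpos)
    (fun s x => (hh.differentiable s x).log (hpos x s).ne')
    (hh.spaceDeriv_log fun x s => (hpos x s).ne')
    fun k => (hh.hasExpGrowth_spaceDeriv k).mul hinv

end HasExpGrowthGrad

lemma timeDeriv_mul (hh : ∀ x, Differentiable ℝ (h x)) (hg : ∀ x, Differentiable ℝ (g x)) :
    timeDeriv (h * g) = timeDeriv h * g + h * timeDeriv g :=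
  funext₂ fun x s => deriv_mul (hh x s) (hg x s)

/-- Functions to which the backward heat operator applies and for which differentiation under
integrals against heat kernels is justified: they are twice differentiable in space and once in
time, with exponential growth of all the derivatives involved. -/
structure HeatRegular {n : ℕ} (h : EuclideanSpace ℝ (Fin n) → ℝ → ℝ) : Prop
    extends HasExpGrowthGrad h where
  hasExpGrowthGrad_spaceDeriv : ∀ k, HasExpGrowthGrad (spaceDeriv k h)
  differentiable_time : ∀ x, Differentiable ℝ (h x)
  hasExpGrowth_timeDeriv : HasExpGrowth (timeDeriv h)

namespace HeatRegular

lemma of_deriv_eq {g : Fin n → EuclideanSpace ℝ (Fin n) → ℝ → ℝ}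
    {b : EuclideanSpace ℝ (Fin n) → ℝ → ℝ} (hh : HasExpGrowthGrad h)
    (hspace : ∀ k, spaceDeriv k h = g k) (hg : ∀ k, HasExpGrowthGrad (g k))
    (hd : ∀ x, Differentiable ℝ (h x)) (htime : timeDeriv h = b) (hb : HasExpGrowth b) :
    HeatRegular h :=
  ⟨hh, fun k => hspace k ▸ hg k, hd, htime ▸ hb⟩

lemma const_mul_time (c : ℝ) : HeatRegular fun (_ : EuclideanSpace ℝ (Fin n)) s => c * s :=
  of_deriv_eq (.of_time (continuous_const_mul c)) (fun _ => funext₂ fun _ _ => pdv_const _)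
    (fun _ => .const 0) (fun _ => differentiable_id.const_mul c)
    (funext₂ fun _ _ => deriv_const_mul_id c) (.const c)

lemma const_mul_coord (c : ℝ) (j : Fin n) :
    HeatRegular fun (x : EuclideanSpace ℝ (Fin n)) _ => c * x j :=
  of_deriv_eq ((HasExpGrowthGrad.const c).mul (.coord j))
    (fun _ => funext₂ fun _ _ => (pdv_const_mul (by fun_prop) c).trans (congrArg _ (pdv_coord j)))
    (fun _ => .const _) (fun _ => differentiable_const _) (funext₂ fun _ s => deriv_const s _)
    (.const 0)

lemma const (c : ℝ) : HeatRegular fun (_ : EuclideanSpace ℝ (Fin n)) _ => c :=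
  of_deriv_eq (.const c) (fun _ => funext₂ fun _ _ => pdv_const _)
    (fun _ => .const _) (fun _ => differentiable_const _) (funext₂ fun _ s => deriv_const s _)
    (.const 0)

lemma add (hh : HeatRegular h) (hg : HeatRegular g) : HeatRegular (h + g) :=
  of_deriv_eq (hh.toHasExpGrowthGrad.add hg.toHasExpGrowthGrad)
    (hh.spaceDeriv_add hg.toHasExpGrowthGrad)
    (fun k => (hh.hasExpGrowthGrad_spaceDeriv k).add (hg.hasExpGrowthGrad_spaceDeriv k))
    (fun x => (hh.differentiable_time x).add (hg.differentiable_time x))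
    (funext₂ fun x s => deriv_add (hh.differentiable_time x s) (hg.differentiable_time x s))
    (hh.hasExpGrowth_timeDeriv.add hg.hasExpGrowth_timeDeriv)

lemma mul (hh : HeatRegular h) (hg : HeatRegular g) : HeatRegular (h * g) :=
  of_deriv_eq (hh.toHasExpGrowthGrad.mul hg.toHasExpGrowthGrad)
    (hh.spaceDeriv_mul hg.toHasExpGrowthGrad)
    (fun k => ((hh.hasExpGrowthGrad_spaceDeriv k).mul hg.toHasExpGrowthGrad).add
      (hh.toHasExpGrowthGrad.mul (hg.hasExpGrowthGrad_spaceDeriv k)))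
    (fun x => (hh.differentiable_time x).mul (hg.differentiable_time x))
    (timeDeriv_mul hh.differentiable_time hg.differentiable_time)
    ((hh.hasExpGrowth_timeDeriv.mul hg.hasExpGrowth).add
      (hh.hasExpGrowth.mul hg.hasExpGrowth_timeDeriv))

lemma sum {ι : Type*} (S : Finset ι) {h : ι → EuclideanSpace ℝ (Fin n) → ℝ → ℝ}
    (hh : ∀ i, HeatRegular (h i)) : HeatRegular (∑ i ∈ S, h i) :=
  Finset.sum_induction h HeatRegular (fun _ _ => add) (const 0) fun i _ => hh i

lemma inv (hh : HeatRegular h) (hinv : HasExpGrowth h⁻¹) (hne : ∀ x s, h x s ≠ 0) :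
    HeatRegular h⁻¹ :=
  have hinv' : HasExpGrowthGrad h⁻¹ := hh.toHasExpGrowthGrad.inv hinv hne
  of_deriv_eq hinv' (hh.spaceDeriv_inv hne)
    (fun k => ((hh.hasExpGrowthGrad_spaceDeriv k).mul (hinv'.mul hinv')).neg)
    (fun x s => (hh.differentiable_time x s).inv (hne x s))
    (b := -(timeDeriv h * (h⁻¹ * h⁻¹)))
    (funext₂ fun x s => ((hh.differentiable_time x s).hasDerivAt.inv (hne x s)).deriv.trans <| by
      simp only [Pi.neg_apply, Pi.mul_apply, Pi.inv_apply, timeDeriv]; field)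
    (hh.hasExpGrowth_timeDeriv.mul (hinv.mul hinv)).neg

lemma timeDeriv_log (hh : HeatRegular h) (hne : ∀ x s, h x s ≠ 0) :
    timeDeriv (fun x s => Real.log (h x s)) = timeDeriv h * h⁻¹ :=
  funext₂ fun x s => ((hh.differentiable_time x s).hasDerivAt.log (hne x s)).deriv

lemma log (hh : HeatRegular h) (hinv : HasExpGrowth h⁻¹) (hpos : ∀ x s, 0 < h x s) :
    HeatRegular fun x s => Real.log (h x s) :=
  have hne : ∀ x s, h x s ≠ 0 := fun x s => (hpos x s).ne'
  of_deriv_eq (hh.toHasExpGrowthGrad.log hinv hpos) (hh.spaceDeriv_log hne)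
    (fun k => (hh.hasExpGrowthGrad_spaceDeriv k).mul (hh.toHasExpGrowthGrad.inv hinv hne))
    (fun x s => (hh.differentiable_time x s).log (hne x s))
    (hh.timeDeriv_log hne) (hh.hasExpGrowth_timeDeriv.mul hinv)

lemma backwardHeat_add (hh : HeatRegular h) (hg : HeatRegular g) :
    backwardHeat (h + g) = backwardHeat h + backwardHeat g := by
  have htime : timeDeriv (h + g) = timeDeriv h + timeDeriv g := funext₂ fun x s =>
    deriv_add (hh.differentiable_time x s) (hg.differentiable_time x s)
  simp only [backwardHeat, htime, hh.spaceDeriv_add hg.toHasExpGrowthGrad,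
    (hh.hasExpGrowthGrad_spaceDeriv _).spaceDeriv_add (hg.hasExpGrowthGrad_spaceDeriv _),
    Finset.sum_add_distrib]
  ring

lemma backwardHeat_mul (hh : HeatRegular h) (hg : HeatRegular g) :
    backwardHeat (h * g) = backwardHeat h * g + h * backwardHeat g
      + 2 * ∑ k, spaceDeriv k h * spaceDeriv k g := by
  have hsecond (k : Fin n) : spaceDeriv k (spaceDeriv k (h * g))
      = spaceDeriv k (spaceDeriv k h) * g + h * spaceDeriv k (spaceDeriv k g)
        + 2 * (spaceDeriv k h * spaceDeriv k g) := by
    have hhk := hh.hasExpGrowthGrad_spaceDeriv k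
    have hgk := hg.hasExpGrowthGrad_spaceDeriv k
    rw [hh.spaceDeriv_mul hg.toHasExpGrowthGrad,
      (hhk.mul hg.toHasExpGrowthGrad).spaceDeriv_add (hh.toHasExpGrowthGrad.mul hgk),
      hhk.spaceDeriv_mul hg.toHasExpGrowthGrad, hh.spaceDeriv_mul hgk]
    ring
  simp only [backwardHeat, hsecond, Finset.sum_add_distrib, ← Finset.sum_mul, ← Finset.mul_sum,
    timeDeriv_mul hh.differentiable_time hg.differentiable_time]
  ring

lemma backwardHeat_sum {ι : Type*} (S : Finset ι) {h : ι → EuclideanSpace ℝ (Fin n) → ℝ → ℝ}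
    (hh : ∀ i, HeatRegular (h i)) :
    backwardHeat (∑ i ∈ S, h i) = ∑ i ∈ S, backwardHeat (h i) := by
  classical
  induction S using Finset.induction_on with
  | empty =>
    funext x s
    simp [backwardHeat, timeDeriv, spaceDeriv, pdv]
  | insert i S hi ih =>
    rw [Finset.sum_insert hi, Finset.sum_insert hi, (hh i).backwardHeat_add (.sum S hh), ih]

lemma backwardHeat_const_mul_time_mul (hh : HeatRegular h) (c : ℝ) :
    backwardHeat ((fun _ s => c * s) * h)
      = (fun _ _ => c) * h + (fun _ s => c * s) * backwardHeat h := by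
  have hheat : backwardHeat (fun (_ : EuclideanSpace ℝ (Fin n)) s => c * s) = fun _ _ => c := by
    funext x s
    simp [backwardHeat, timeDeriv, spaceDeriv, pdv]
  have hspace (k : Fin n) :
      spaceDeriv k (fun (_ : EuclideanSpace ℝ (Fin n)) s => c * s) = 0 :=
    funext₂ fun _ _ => pdv_const _
  rw [(const_mul_time c).backwardHeat_mul hh, hheat]
  simp only [hspace, zero_mul, Finset.sum_const_zero, mul_zero, add_zero]

lemma backwardHeat_const_mul_coord_mul (hh : HeatRegular h) (c : ℝ) (j : Fin n) :
    backwardHeat ((fun x _ => c * x j) * h)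
      = (fun x _ => c * x j) * backwardHeat h + (fun _ _ => 2 * c) * spaceDeriv j h := by
  have hspace (k : Fin n) : spaceDeriv k (fun (x : EuclideanSpace ℝ (Fin n)) (_ : ℝ) => c * x j)
      = fun _ _ => c * if j = k then 1 else 0 :=
    funext₂ fun _ _ => (pdv_const_mul (by fun_prop) c).trans (congrArg _ (pdv_coord j))
  have hheat : backwardHeat (fun (x : EuclideanSpace ℝ (Fin n)) (_ : ℝ) => c * x j) = 0 := by
    funext x s
    simp only [backwardHeat, hspace]
    simp [timeDeriv, spaceDeriv, pdv]
  rw [(const_mul_coord c j).backwardHeat_mul hh, hheat]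
  funext x s
  simp [hspace]
  ring

end HeatRegular

/-- Solutions of the backward heat equation `∂ₛ h + Δ h = 0` of exponential growth. -/
structure IsBackwardCaloric {n : ℕ} (h : EuclideanSpace ℝ (Fin n) → ℝ → ℝ) : Prop
    extends HeatRegular h where
  backwardHeat_eq_zero : backwardHeat h = 0

namespace IsBackwardCaloric

variable (hh : IsBackwardCaloric h) (hinv : HasExpGrowth h⁻¹) (hpos : ∀ x s, 0 < h x s)
include hh hinv hpos

lemma backwardHeat_mul_log :
    backwardHeat (h * fun x s => Real.log (h x s))
      = ∑ k, spaceDeriv k h * (spaceDeriv k h * h⁻¹) := by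
  have hne : ∀ x s, h x s ≠ 0 := fun x s => (hpos x s).ne'
  have hinv' := hh.toHasExpGrowthGrad.inv hinv hne
  have hlog : h * backwardHeat (fun x s => Real.log (h x s))
      = -∑ k, spaceDeriv k h * (spaceDeriv k h * h⁻¹) := by
    have hself : h * h⁻¹ = 1 := funext₂ fun x s => mul_inv_cancel₀ (hne x s)
    have hheat := hh.backwardHeat_eq_zero
    rw [backwardHeat] at hheat
    simp only [backwardHeat, hh.timeDeriv_log hne, hh.spaceDeriv_log hne,
      (hh.hasExpGrowthGrad_spaceDeriv _).spaceDeriv_mul hinv', hh.spaceDeriv_inv hne,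
      Finset.sum_add_distrib, ← Finset.sum_mul]
    simp only [mul_neg, Finset.sum_neg_distrib, ← mul_assoc, ← Finset.sum_mul]
    linear_combination (h * h⁻¹) * hheat
      - h⁻¹ * (∑ k, spaceDeriv k h * spaceDeriv k h) * hself
  rw [hh.backwardHeat_mul (hh.log hinv hpos), hh.backwardHeat_eq_zero, hlog]
  simp only [hh.spaceDeriv_log hne]
  ring

omit hpos in
lemma backwardHeat_mul_mul_inv {a : EuclideanSpace ℝ (Fin n) → ℝ → ℝ} (ha : IsBackwardCaloric a)
    (hne : ∀ x s, h x s ≠ 0) :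
    backwardHeat (a * (a * h⁻¹)) = 2 * h * ∑ k, spaceDeriv k (a * h⁻¹) ^ 2 := by
  set q := a * h⁻¹ with hq_def
  have hq : HeatRegular q := ha.mul (hh.inv hinv hne)
  have ha_eq : a = h * q := by
    funext x s; simp [hq_def, mul_div_cancel₀, hne x s, ← div_eq_mul_inv]
  have hspace (k : Fin n) : spaceDeriv k a = spaceDeriv k h * q + h * spaceDeriv k q := by
    rw [← hh.spaceDeriv_mul hq.toHasExpGrowthGrad, ← ha_eq]
  have hheat : h * backwardHeat q + 2 * ∑ k, spaceDeriv k h * spaceDeriv k q = 0 := by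
    rw [← ha.backwardHeat_eq_zero, ha_eq, hh.backwardHeat_mul hq, hh.backwardHeat_eq_zero]
    ring
  have hcross : ∑ k, spaceDeriv k a * spaceDeriv k q
      = q * ∑ k, spaceDeriv k h * spaceDeriv k q + h * ∑ k, spaceDeriv k q ^ 2 := by
    simp only [hspace, Finset.mul_sum, ← Finset.sum_add_distrib]
    exact Finset.sum_congr rfl fun k _ => by ring
  rw [ha.backwardHeat_mul hq, ha.backwardHeat_eq_zero, hcross]
  linear_combination q * hheat + backwardHeat q * ha_eq

end IsBackwardCaloric

/-- The integrand of Perelman's entropy in self-similar variables. If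
`u(y, t) = (4πt)^{-n/2} exp(-‖y‖²/(4t)) h(x, s)` with `x = y/(2t)` and `s = 1/(4t)`, then this is
the value of `-W h` at the point `(x, s)`. -/
noncomputable def entropyDensity {n : ℕ} (h : EuclideanSpace ℝ (Fin n) → ℝ → ℝ) :
    EuclideanSpace ℝ (Fin n) → ℝ → ℝ :=
  fun x s => h x s * (s * (2 * lap (fun y => Real.log (h y s)) x
      + ‖gradient (fun y => Real.log (h y s)) x‖ ^ 2)
    - ∑ j, x j * pdv j (fun y => Real.log (h y s)) x + Real.log (h x s))

/-- The part of `entropyDensity` contributed by the `j`-th coordinate, in terms of the derivatives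
of `h` itself. -/
noncomputable def entropyTerm {n : ℕ} (j : Fin n) (h : EuclideanSpace ℝ (Fin n) → ℝ → ℝ) :
    EuclideanSpace ℝ (Fin n) → ℝ → ℝ :=
  (fun _ s => 2 * s) * spaceDeriv j (spaceDeriv j h) + (fun x _ => -1 * x j) * spaceDeriv j h
    + (fun _ s => -1 * s) * (spaceDeriv j h * (spaceDeriv j h * h⁻¹))

lemma HeatRegular.entropyDensity_eq (hh : HeatRegular h) (hinv : HasExpGrowth h⁻¹)
    (hne : ∀ x s, h x s ≠ 0) :
    entropyDensity h = h * (fun x s => Real.log (h x s))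
      + ∑ j, entropyTerm j h := by
  have hgrad (j : Fin n) (x) (s : ℝ) : pdv j (fun y => Real.log (h y s)) x
      = spaceDeriv j h x s * (h x s)⁻¹ :=
    congrFun₂ (hh.spaceDeriv_log hne j) x s
  have hhess (j : Fin n) (x) (s : ℝ) : hess j j (fun y => Real.log (h y s)) x
      = spaceDeriv j (spaceDeriv j h) x s * (h x s)⁻¹ - (spaceDeriv j h x s * (h x s)⁻¹) ^ 2 := by
    change spaceDeriv j (spaceDeriv j fun x s => Real.log (h x s)) x s = _
    rw [hh.spaceDeriv_log hne, (hh.hasExpGrowthGrad_spaceDeriv j).spaceDeriv_mul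
      (hh.toHasExpGrowthGrad.inv hinv hne), hh.spaceDeriv_inv hne]
    simp only [Pi.add_apply, Pi.mul_apply, Pi.neg_apply, Pi.inv_apply]
    ring
  funext x s
  have hself : h x s * (h x s)⁻¹ = 1 := mul_inv_cancel₀ (hne x s)
  simp only [entropyDensity, entropyTerm, lap, norm_gradient_sq, hgrad, hhess, Pi.add_apply,
    Pi.mul_apply, Pi.inv_apply, Finset.sum_apply]
  simp only [Finset.mul_sum, ← Finset.sum_add_distrib, ← Finset.sum_sub_distrib, mul_add,
    add_comm (h x s * Real.log (h x s))]
  congr 1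
  refine Finset.sum_congr rfl fun j _ => ?_
  linear_combination (2 * s * spaceDeriv j (spaceDeriv j h) x s - x j * spaceDeriv j h x s
    - s * spaceDeriv j h x s ^ 2 * (h x s)⁻¹) * hself

namespace IsBackwardCaloric

variable (hh : IsBackwardCaloric h) (hinv : HasExpGrowth h⁻¹)
  (hgrad : ∀ j, IsBackwardCaloric (spaceDeriv j h))
  (hhess : ∀ j, IsBackwardCaloric (spaceDeriv j (spaceDeriv j h)))

include hh hinv hgrad hhess

lemma heatRegular_entropyTerm (hne : ∀ x s, h x s ≠ 0) (j : Fin n) :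
    HeatRegular (entropyTerm j h) :=
  (((HeatRegular.const_mul_time 2).mul (hhess j).toHeatRegular).add
    ((HeatRegular.const_mul_coord (-1) j).mul (hgrad j).toHeatRegular)).add
    ((HeatRegular.const_mul_time (-1)).mul ((hgrad j).mul ((hgrad j).mul (hh.inv hinv hne))))

-- The Hessian term `2 s ∂ⱼ²h` and the drift term `xⱼ ∂ⱼh` cancel under `∂ₛ + Δ`.
lemma backwardHeat_entropyTerm (hne : ∀ x s, h x s ≠ 0) (j : Fin n) :
    backwardHeat (entropyTerm j h)
      = (fun _ s => -2 * s) * h * ∑ k, spaceDeriv k (spaceDeriv j h * h⁻¹) ^ 2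
        - spaceDeriv j h * (spaceDeriv j h * h⁻¹) := by
  have hquot := (hgrad j).mul ((hgrad j).mul (hh.inv hinv hne))
  rw [entropyTerm, (((HeatRegular.const_mul_time 2).mul (hhess j).toHeatRegular).add
      ((HeatRegular.const_mul_coord (-1) j).mul (hgrad j).toHeatRegular)).backwardHeat_add
      ((HeatRegular.const_mul_time (-1)).mul hquot),
    ((HeatRegular.const_mul_time 2).mul (hhess j).toHeatRegular).backwardHeat_add
      ((HeatRegular.const_mul_coord (-1) j).mul (hgrad j).toHeatRegular),
    (hhess j).backwardHeat_const_mul_time_mul, (hgrad j).backwardHeat_const_mul_coord_mul,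
    hquot.backwardHeat_const_mul_time_mul, hh.backwardHeat_mul_mul_inv hinv (hgrad j) hne,
    (hgrad j).backwardHeat_eq_zero, (hhess j).backwardHeat_eq_zero]
  funext x s
  simp only [Pi.add_apply, Pi.mul_apply, Pi.sub_apply, Pi.ofNat_apply]
  ring

variable (hpos : ∀ x s, 0 < h x s)
include hpos

lemma heatRegular_entropyDensity : HeatRegular (entropyDensity h) := by
  have hne : ∀ x s, h x s ≠ 0 := fun x s => (hpos x s).ne'
  rw [hh.entropyDensity_eq hinv hne]
  exact (hh.mul (hh.log hinv hpos)).add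
    (.sum _ (hh.heatRegular_entropyTerm hinv hgrad hhess hne))

theorem backwardHeat_entropyDensity (x : EuclideanSpace ℝ (Fin n)) (s : ℝ) :
    backwardHeat (entropyDensity h) x s
      = -2 * s * h x s * ∑ i, ∑ j, hess i j (fun y => Real.log (h y s)) x ^ 2 := by
  have hne : ∀ x s, h x s ≠ 0 := fun x s => (hpos x s).ne'
  have hterm := hh.heatRegular_entropyTerm hinv hgrad hhess hne
  rw [hh.entropyDensity_eq hinv hne, (hh.mul (hh.log hinv hpos)).backwardHeat_add (.sum _ hterm),
    hh.backwardHeat_mul_log hinv hpos, HeatRegular.backwardHeat_sum _ hterm]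
  simp only [hh.backwardHeat_entropyTerm hinv hgrad hhess hne, Finset.sum_sub_distrib,
    add_sub_cancel, ← Finset.mul_sum, ← hh.spaceDeriv_log hne]
  rw [Finset.sum_comm]
  simp [hess, spaceDeriv]

end IsBackwardCaloric

end SpaceTime

section HeatKernel

variable {n : ℕ} {x x₀ : EuclideanSpace ℝ (Fin n)} {r r' s s₀ : ℝ}
  {h : EuclideanSpace ℝ (Fin n) → ℝ → ℝ}

lemma continuous_heatK (x₀ : EuclideanSpace ℝ (Fin n)) (r : ℝ) :
    Continuous fun x => heatK n x x₀ r := by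
  unfold heatK; fun_prop

lemma differentiable_norm_sub_sq (x₀ : EuclideanSpace ℝ (Fin n)) :
    Differentiable ℝ fun x => ‖x - x₀‖ ^ 2 :=
  (differentiable_id.sub_const x₀).norm_sq ℝ

lemma differentiable_heatK (x₀ : EuclideanSpace ℝ (Fin n)) (r : ℝ) :
    Differentiable ℝ fun x => heatK n x x₀ r := by
  unfold heatK
  simp only [div_eq_mul_inv]
  exact ((differentiable_norm_sub_sq x₀).fun_neg.mul_const (4 * r)⁻¹).exp.const_mul _

lemma heatK_nonneg (hr : 0 ≤ r) : 0 ≤ heatK n x x₀ r := by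
  unfold heatK; positivity

lemma pdv_heatK (k : Fin n) :
    pdv k (fun y => heatK n y x₀ r) x = -(x k - x₀ k) / (2 * r) * heatK n x x₀ r := by
  have hexp (q : ℝ) : HasDerivAt (fun q => (4 * π * r) ^ (-(n : ℝ) / 2) * rexp (-q / (4 * r)))
      (-1 / (4 * r) * ((4 * π * r) ^ (-(n : ℝ) / 2) * rexp (-q / (4 * r)))) q :=
    ((((hasDerivAt_id q).neg.div_const (4 * r)).exp).const_mul _).congr_deriv (by simp; ring)
  refine (pdv_comp (hexp _) (differentiable_norm_sub_sq x₀ x)).trans ?_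
  rw [pdv_norm_sub_sq, heatK]
  ring

lemma hasDerivAt_heatK (hr : 0 < r) :
    HasDerivAt (fun r => heatK n x x₀ r)
      ((‖x - x₀‖ ^ 2 / (4 * r ^ 2) - n / (2 * r)) * heatK n x x₀ r) r := by
  have hpow := ((hasDerivAt_id' r).const_mul (4 * π)).rpow_const (p := -(n : ℝ) / 2)
    (Or.inl (by positivity))
  have hexp : HasDerivAt (fun r => -‖x - x₀‖ ^ 2 / (4 * r)) (‖x - x₀‖ ^ 2 / (4 * r ^ 2)) r :=
    ((hasDerivAt_const r (-‖x - x₀‖ ^ 2)).fun_div ((hasDerivAt_id' r).const_mul 4)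
      (by positivity)).congr_deriv (by field)
  refine (hpow.fun_mul hexp.exp).congr_deriv ?_
  rw [rpow_sub_one (by positivity)]
  simp only [heatK]
  field

lemma heatK_le_of_mem_Ioo (hr : 0 < r) (hr' : r' ∈ Ioo (r / 2) (2 * r)) :
    heatK n x x₀ r' ≤ (2 * π * r) ^ (-(n : ℝ) / 2) * rexp (-(1 / (8 * r)) * ‖x - x₀‖ ^ 2) := by
  obtain ⟨hlt, hgt⟩ := hr'
  have hr'0 : 0 < r' := by linarith
  have hpow : (4 * π * r') ^ (-(n : ℝ) / 2) ≤ (2 * π * r) ^ (-(n : ℝ) / 2) := by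
    refine rpow_le_rpow_of_nonpos (by positivity) (by nlinarith [pi_pos]) ?_
    linarith [n.cast_nonneg (α := ℝ)]
  have hexp : -‖x - x₀‖ ^ 2 / (4 * r') ≤ -(1 / (8 * r)) * ‖x - x₀‖ ^ 2 := by
    have hinv : 1 / (8 * r) ≤ 1 / (4 * r') := one_div_le_one_div_of_le (by positivity) (by linarith)
    calc -‖x - x₀‖ ^ 2 / (4 * r') = -(1 / (4 * r') * ‖x - x₀‖ ^ 2) := by ring
      _ ≤ -(1 / (8 * r) * ‖x - x₀‖ ^ 2) := by gcongr
      _ = _ := by ring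
  unfold heatK
  gcongr

lemma abs_sq_div_sub_le_of_mem_Ioo (a m : ℝ) (hm : 0 ≤ m) (hr : 0 < r)
    (hr' : r' ∈ Ioo (r / 2) (2 * r)) :
    |a ^ 2 / (4 * r' ^ 2) - m / (2 * r')| ≤ a ^ 2 / r ^ 2 + m / r := by
  have hr'0 : 0 < r' := by linarith [hr'.1]
  have hle : r ≤ 2 * r' := by linarith [hr'.1]
  calc |a ^ 2 / (4 * r' ^ 2) - m / (2 * r')|
      ≤ |a ^ 2 / (4 * r' ^ 2)| + |m / (2 * r')| := abs_sub _ _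
    _ = a ^ 2 / (2 * r') ^ 2 + m / (2 * r') := by
        rw [abs_of_nonneg (by positivity), abs_of_nonneg (by positivity)]; ring
    _ ≤ a ^ 2 / r ^ 2 + m / r := by gcongr

lemma HasExpGrowth.integrable_mul_heatK (hh : HasExpGrowth h) (s : ℝ)
    (x₀ : EuclideanSpace ℝ (Fin n)) (hr : 0 < r) :
    Integrable fun x => h x s * heatK n x x₀ r := by
  refine ((hh.integrable_mul_exp_neg s x₀ (c := 1 / (4 * r)) (by positivity)).const_mul
    ((4 * π * r) ^ (-(n : ℝ) / 2))).congr (ae_of_all _ fun x => ?_)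
  simp only [heatK, show -‖x - x₀‖ ^ 2 / (4 * r) = -(1 / (4 * r)) * ‖x - x₀‖ ^ 2 by ring]
  ring

namespace HasExpGrowthGrad

lemma coord_sub (x₀ : EuclideanSpace ℝ (Fin n)) (k : Fin n) :
    HasExpGrowthGrad fun (x : EuclideanSpace ℝ (Fin n)) _ => x k - x₀ k :=
  funext₂ (fun (x : EuclideanSpace ℝ (Fin n)) (_ : ℝ) => sub_eq_add_neg (x k) (x₀ k)) ▸
    (coord k).add (const (-x₀ k))

lemma spaceDeriv_mul_coord_sub (hh : HasExpGrowthGrad h) (k : Fin n) :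
    spaceDeriv k (h * fun x _ => x k - x₀ k) = (spaceDeriv k h * fun x _ => x k - x₀ k) + h := by
  rw [hh.spaceDeriv_mul (coord_sub x₀ k)]
  congr 1
  funext x s
  have : pdv k (fun y => y k - x₀ k) x = 1 := by
    rw [pdv_sub (by fun_prop) (by fun_prop), pdv_coord, pdv_const]; simp
  simp [spaceDeriv, this]

lemma integral_mul_coord_sub_mul_heatK (hh : HasExpGrowthGrad h) (s : ℝ)
    (x₀ : EuclideanSpace ℝ (Fin n)) (k : Fin n) (hr : 0 < r) :
    ∫ x, h x s * (x k - x₀ k) * heatK n x x₀ r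
      = 2 * r * ∫ x, spaceDeriv k h x s * heatK n x x₀ r := by
  have hmul := (hh.hasExpGrowth.mul (coord_sub x₀ k).hasExpGrowth).integrable_mul_heatK s x₀ hr
  have hpdv (x : EuclideanSpace ℝ (Fin n)) : h x s * pdv k (fun y => heatK n y x₀ r) x
      = -(2 * r)⁻¹ * (h x s * (x k - x₀ k) * heatK n x x₀ r) := by
    rw [pdv_heatK]; ring
  have hparts : ∫ x, h x s * pdv k (fun y => heatK n y x₀ r) x
      = -∫ x, spaceDeriv k h x s * heatK n x x₀ r :=
    integral_mul_fderiv_eq_neg_fderiv_mul_of_integrable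
      ((hh.hasExpGrowth_spaceDeriv k).integrable_mul_heatK s x₀ hr)
      ((hmul.const_mul _).congr (ae_of_all _ fun x => (hpdv x).symm))
      (hh.hasExpGrowth.integrable_mul_heatK s x₀ hr)
      (fun x _ => hh.differentiable s x) (fun x _ => differentiable_heatK x₀ r x)
  simp only [hpdv, integral_const_mul] at hparts
  field_simp at hparts
  linarith

lemma integral_mul_coord_sub_sq_mul_heatK (hh : HasExpGrowthGrad h) (s : ℝ)
    (x₀ : EuclideanSpace ℝ (Fin n)) (k : Fin n) (hhk : HasExpGrowthGrad (spaceDeriv k h))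
    (hr : 0 < r) :
    ∫ x, h x s * (((x k - x₀ k) ^ 2 / (4 * r ^ 2) - 1 / (2 * r)) * heatK n x x₀ r)
      = ∫ x, spaceDeriv k (spaceDeriv k h) x s * heatK n x x₀ r := by
  have hcoord := coord_sub x₀ k
  have hint := hh.hasExpGrowth.integrable_mul_heatK s x₀ hr
  have hint₁ := (hhk.hasExpGrowth.mul hcoord.hasExpGrowth).integrable_mul_heatK s x₀ hr
  have hint₂ : Integrable fun x => h x s * (x k - x₀ k) * (x k - x₀ k) * heatK n x x₀ r :=
    ((hh.mul hcoord).hasExpGrowth.mul hcoord.hasExpGrowth).integrable_mul_heatK s x₀ hr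
  have hstein : ∫ x, h x s * (x k - x₀ k) * (x k - x₀ k) * heatK n x x₀ r
      = 2 * r * ((2 * r * ∫ x, spaceDeriv k (spaceDeriv k h) x s * heatK n x x₀ r)
        + ∫ x, h x s * heatK n x x₀ r) := by
    rw [← hhk.integral_mul_coord_sub_mul_heatK s x₀ k hr]
    refine ((hh.mul hcoord).integral_mul_coord_sub_mul_heatK s x₀ k hr).trans ?_
    rw [hh.spaceDeriv_mul_coord_sub k]
    simp only [Pi.add_apply, add_mul]
    exact congrArg _ (integral_add hint₁ hint)
  calc ∫ x, h x s * (((x k - x₀ k) ^ 2 / (4 * r ^ 2) - 1 / (2 * r)) * heatK n x x₀ r)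
      = ∫ x, ((4 * r ^ 2)⁻¹ * (h x s * (x k - x₀ k) * (x k - x₀ k) * heatK n x x₀ r)
          - (2 * r)⁻¹ * (h x s * heatK n x x₀ r)) := by
        congr 1; funext x; ring
    _ = (4 * r ^ 2)⁻¹ * (∫ x, h x s * (x k - x₀ k) * (x k - x₀ k) * heatK n x x₀ r)
          - (2 * r)⁻¹ * ∫ x, h x s * heatK n x x₀ r := by
        rw [integral_sub (hint₂.const_mul _) (hint.const_mul _), integral_const_mul,
          integral_const_mul]
    _ = ∫ x, spaceDeriv k (spaceDeriv k h) x s * heatK n x x₀ r := by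
        rw [hstein]; field

end HasExpGrowthGrad

namespace HeatRegular

lemma integral_laplacian_mul_heatK (hh : HeatRegular h) (s : ℝ)
    (x₀ : EuclideanSpace ℝ (Fin n)) (hr : 0 < r) :
    ∫ x, (∑ k, spaceDeriv k (spaceDeriv k h) x s) * heatK n x x₀ r
      = ∫ x, h x s * ((‖x - x₀‖ ^ 2 / (4 * r ^ 2) - n / (2 * r)) * heatK n x x₀ r) := by
  have hcoeff (x : EuclideanSpace ℝ (Fin n)) : ‖x - x₀‖ ^ 2 / (4 * r ^ 2) - n / (2 * r)
      = ∑ k, ((x k - x₀ k) ^ 2 / (4 * r ^ 2) - 1 / (2 * r)) := by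
    rw [Finset.sum_sub_distrib, ← Finset.sum_div, EuclideanSpace.real_norm_sq_eq]
    simp
    ring
  have hint (k : Fin n) : Integrable fun x =>
      h x s * (((x k - x₀ k) ^ 2 / (4 * r ^ 2) - 1 / (2 * r)) * heatK n x x₀ r) := by
    have hq := (HasExpGrowthGrad.coord_sub x₀ k).hasExpGrowth
    refine (hh.hasExpGrowth.mul (((hq.mul hq).mul (.const (4 * r ^ 2)⁻¹)).add
      (.const (-(2 * r)⁻¹)))).integrable_mul_heatK s x₀ hr |>.congr (ae_of_all _ fun x => ?_)
    simp only [Pi.mul_apply, Pi.add_apply]; ring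
  simp only [hcoeff, Finset.sum_mul, Finset.mul_sum]
  rw [integral_finsetSum _ fun k _ => hint k, integral_finsetSum _ fun k _ =>
    (hh.hasExpGrowthGrad_spaceDeriv k).hasExpGrowth_spaceDeriv k |>.integrable_mul_heatK s x₀ hr]
  exact Finset.sum_congr rfl fun k _ => (hh.integral_mul_coord_sub_sq_mul_heatK s x₀ k
    (hh.hasExpGrowthGrad_spaceDeriv k) hr).symm

lemma exists_integrable_bound_deriv_mul_heatK (hh : HeatRegular h) (s₀ : ℝ)
    (x₀ : EuclideanSpace ℝ (Fin n)) (hr : 0 < r) :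
    ∃ bound : EuclideanSpace ℝ (Fin n) → ℝ, Integrable bound ∧
      ∀ x, ∀ r' ∈ Ioo (r / 2) (2 * r), ‖timeDeriv h x (s₀ + r') * heatK n x x₀ r'
        + h x (s₀ + r') * ((‖x - x₀‖ ^ 2 / (4 * r' ^ 2) - n / (2 * r')) * heatK n x x₀ r')‖
          ≤ bound x := by
  obtain ⟨C, hC, hCh⟩ := hh.hasExpGrowth.exists_bound (|s₀| + 2 * r)
  obtain ⟨D, hD, hDh⟩ := hh.hasExpGrowth_timeDeriv.exists_bound (|s₀| + 2 * r)
  have hgrowth : HasExpGrowth fun (x : EuclideanSpace ℝ (Fin n)) _ => D * rexp (D * ‖x‖)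
      + C * rexp (C * ‖x‖) * (‖x - x₀‖ ^ 2 / r ^ 2 + n / r) :=
    (HasExpGrowth.exp_norm D).add ((HasExpGrowth.exp_norm C).mul (.norm_sub_sq_div_add x₀ _ _))
  refine ⟨_, (hgrowth.integrable_mul_exp_neg 0 x₀ (c := 1 / (8 * r)) (by positivity)).const_mul
    ((2 * π * r) ^ (-(n : ℝ) / 2)), fun x r' hr' => ?_⟩
  have hr'0 : 0 < r' := by linarith [hr'.1]
  have hs : |s₀ + r'| ≤ |s₀| + 2 * r :=
    (abs_add_le _ _).trans (by rw [abs_of_pos hr'0]; linarith [hr'.2])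
  have hK := heatK_nonneg (x := x) (x₀ := x₀) hr'0.le
  calc ‖timeDeriv h x (s₀ + r') * heatK n x x₀ r'
        + h x (s₀ + r') * ((‖x - x₀‖ ^ 2 / (4 * r' ^ 2) - n / (2 * r')) * heatK n x x₀ r')‖
      = |timeDeriv h x (s₀ + r') + h x (s₀ + r')
          * (‖x - x₀‖ ^ 2 / (4 * r' ^ 2) - n / (2 * r'))| * heatK n x x₀ r' := by
        rw [norm_eq_abs, ← abs_of_nonneg hK, ← abs_mul, abs_of_nonneg hK]; ring_nf
    _ ≤ (|timeDeriv h x (s₀ + r')| + |h x (s₀ + r')|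
          * |‖x - x₀‖ ^ 2 / (4 * r' ^ 2) - n / (2 * r')|) * heatK n x x₀ r' := by
        gcongr; rw [← abs_mul]; exact abs_add_le _ _
    _ ≤ (D * rexp (D * ‖x‖) + C * rexp (C * ‖x‖) * (‖x - x₀‖ ^ 2 / r ^ 2 + n / r))
          * ((2 * π * r) ^ (-(n : ℝ) / 2) * rexp (-(1 / (8 * r)) * ‖x - x₀‖ ^ 2)) := by
        gcongr
        · exact hDh x _ hs
        · exact hCh x _ hs
        · exact abs_sq_div_sub_le_of_mem_Ioo _ _ n.cast_nonneg hr hr'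
        · exact heatK_le_of_mem_Ioo hr hr'
    _ = _ := by ring

theorem hasDerivAt_integral_mul_heatK (hh : HeatRegular h) (s₀ : ℝ)
    (x₀ : EuclideanSpace ℝ (Fin n)) (hr : 0 < r) :
    HasDerivAt (fun r => ∫ x, h x (s₀ + r) * heatK n x x₀ r)
      (∫ x, backwardHeat h x (s₀ + r) * heatK n x x₀ r) r := by
  obtain ⟨bound, hbound, hle⟩ := hh.exists_integrable_bound_deriv_mul_heatK s₀ x₀ hr
  have htime := hh.hasExpGrowth_timeDeriv.integrable_mul_heatK (s₀ + r) x₀ hr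
  have hcoeff : Integrable fun x => h x (s₀ + r)
      * ((‖x - x₀‖ ^ 2 / (4 * r ^ 2) - n / (2 * r)) * heatK n x x₀ r) := by
    simp only [sub_eq_add_neg, ← mul_assoc]
    exact (hh.hasExpGrowth.mul (.norm_sub_sq_div_add x₀ _ _)).integrable_mul_heatK _ x₀ hr
  have hlap : HasExpGrowth (∑ k, spaceDeriv k (spaceDeriv k h)) :=
    .sum _ fun k => (hh.hasExpGrowthGrad_spaceDeriv k).hasExpGrowth_spaceDeriv k
  refine (hasDerivAt_integral_of_dominated_loc_of_deriv_le
    (Ioo_mem_nhds (half_lt_self hr) (by linarith : r < 2 * r))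
    (Eventually.of_forall fun r => ((hh.hasExpGrowth.continuous _).mul
      (continuous_heatK x₀ r)).aestronglyMeasurable)
    (hh.hasExpGrowth.integrable_mul_heatK _ x₀ hr) (htime.add hcoeff).aestronglyMeasurable
    (ae_of_all _ hle) hbound (ae_of_all _ fun x r' hr' =>
      ((hh.differentiable_time x (s₀ + r')).hasDerivAt.comp_const_add s₀ r').fun_mul
        (hasDerivAt_heatK (by linarith [hr'.1])))).2.congr_deriv ?_
  rw [integral_add htime hcoeff, ← hh.integral_laplacian_mul_heatK _ x₀ hr,
    ← integral_add htime (by simpa using hlap.integrable_mul_heatK (s₀ + r) x₀ hr)]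
  simp only [backwardHeat, Pi.add_apply, Finset.sum_apply, add_mul]

end HeatRegular

end HeatKernel

section ExponentialIntegrals

variable {α F : Type*} [MeasurableSpace α] {μ : Measure α} [NormedAddCommGroup F]
  [NormedSpace ℝ F] {q : α → ℝ} {Y : α → F →L[ℝ] ℝ} {R : ℝ}

lemma exp_apply_le {L : F →L[ℝ] ℝ} (hL : ‖L‖ ≤ R) {ξ : F} {B : ℝ} (hξ : ‖ξ‖ ≤ B) :
    rexp (L ξ) ≤ rexp (R * B) :=
  exp_le_exp.2 ((le_abs_self _).trans (L.le_of_opNorm_le_of_le hL hξ))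

lemma integrable_mul_exp_apply (hq : Integrable q μ) (hY : AEStronglyMeasurable Y μ)
    (hR : ∀ᵐ a ∂μ, ‖Y a‖ ≤ R) (ξ : F) : Integrable (fun a => q a * rexp (Y a ξ)) μ :=
  hq.mul_bdd (continuous_exp.comp_aestronglyMeasurable (hY.apply_continuousLinearMap ξ))
    (hR.mono fun a ha => by rw [norm_eq_abs, abs_exp]; exact exp_apply_le ha le_rfl)

lemma norm_mul_exp_apply_smul_le {L : F →L[ℝ] ℝ} (hL : ‖L‖ ≤ R) (c : ℝ) {ξ : F} {B : ℝ}
    (hξ : ‖ξ‖ ≤ B) : ‖(c * rexp (L ξ)) • L‖ ≤ |c| * rexp (R * B) * R := by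
  rw [norm_smul, norm_mul, norm_eq_abs, norm_eq_abs, abs_exp]
  have hexp := exp_apply_le hL hξ
  gcongr

lemma integrable_mul_exp_apply_smul (hq : Integrable q μ) (hY : AEStronglyMeasurable Y μ)
    (hR : ∀ᵐ a ∂μ, ‖Y a‖ ≤ R) (ξ : F) : Integrable (fun a => (q a * rexp (Y a ξ)) • Y a) μ :=
  ((hq.abs.mul_const (rexp (R * ‖ξ‖))).mul_const R).mono'
    ((integrable_mul_exp_apply hq hY hR ξ).aestronglyMeasurable.smul hY)
    (hR.mono fun a ha => norm_mul_exp_apply_smul_le ha (q a) le_rfl)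

theorem hasFDerivAt_integral_mul_exp_apply (hq : Integrable q μ) (hY : AEStronglyMeasurable Y μ)
    (hR : ∀ᵐ a ∂μ, ‖Y a‖ ≤ R) (ξ : F) :
    HasFDerivAt (fun ξ => ∫ a, q a * rexp (Y a ξ) ∂μ)
      (∫ a, (q a * rexp (Y a ξ)) • Y a ∂μ) ξ := by
  refine hasFDerivAt_integral_of_dominated_of_fderiv_le
    (F' := fun ζ a => (q a * rexp (Y a ζ)) • Y a) (Metric.ball_mem_nhds ξ one_pos)
    (.of_forall fun ζ => (integrable_mul_exp_apply hq hY hR ζ).aestronglyMeasurable)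
    (integrable_mul_exp_apply hq hY hR ξ)
    (integrable_mul_exp_apply_smul hq hY hR ξ).aestronglyMeasurable
    (hR.mono fun a ha ζ hζ => norm_mul_exp_apply_smul_le ha (q a) (B := ‖ξ‖ + 1) ?_)
    ((hq.abs.mul_const _).mul_const R) (ae_of_all _ fun a ζ _ => ?_)
  · linarith [norm_le_norm_add_norm_sub' ζ ξ, mem_ball_iff_norm.1 hζ]
  · exact ((Y a).hasFDerivAt.exp.const_mul (q a)).congr_fderiv (by rw [smul_smul])

end ExponentialIntegrals

/-- The integral `∫ q(z) exp(⟪z, x⟫ - s‖z‖²) dμ(z)`, a superposition of the exponential solutions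
of the backward heat equation; for `q = 1` it is the heat evolution of `μ` in self-similar
variables. -/
noncomputable def laplaceMoment {E : Type*} [NormedAddCommGroup E] [InnerProductSpace ℝ E]
    [MeasurableSpace E] (μ : Measure E) (q : E → ℝ) (x : E) (s : ℝ) : ℝ :=
  ∫ z, q z * rexp (inner ℝ z x - s * ‖z‖ ^ 2) ∂μ

/-- The exponent `(x, s) ↦ ⟪z, x⟫ - s‖z‖²` of `laplaceMoment` as a linear functional on
space-time. -/
noncomputable def laplaceExponent {E : Type*} [NormedAddCommGroup E] [InnerProductSpace ℝ E]
    (z : E) : E × ℝ →L[ℝ] ℝ :=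
  (innerSL ℝ z).coprod (-‖z‖ ^ 2 • ContinuousLinearMap.id ℝ ℝ)

section LaplaceMoment

variable {E : Type*} [NormedAddCommGroup E] [InnerProductSpace ℝ E] {q : E → ℝ} {R : ℝ}

lemma laplaceExponent_apply (z x : E) (s : ℝ) :
    laplaceExponent z (x, s) = inner ℝ z x - s * ‖z‖ ^ 2 := by
  simp [laplaceExponent]; ring

lemma continuous_laplaceExponent : Continuous (laplaceExponent (E := E)) := by
  unfold laplaceExponent
  fun_prop

lemma norm_laplaceExponent_le {z : E} (hz : ‖z‖ ≤ R) : ‖laplaceExponent z‖ ≤ R + R ^ 2 := by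
  have hR : 0 ≤ R := (norm_nonneg z).trans hz
  refine ContinuousLinearMap.opNorm_le_bound _ (by positivity) fun p => ?_
  calc ‖laplaceExponent z p‖ ≤ ‖inner ℝ z p.1‖ + ‖p.2 * ‖z‖ ^ 2‖ := by
        rw [← Prod.mk.eta (p := p), laplaceExponent_apply]; exact norm_sub_le _ _
    _ ≤ ‖z‖ * ‖p.1‖ + ‖p.2‖ * ‖z‖ ^ 2 := by
        gcongr
        · exact norm_inner_le_norm z p.1
        · rw [norm_mul, norm_pow, norm_norm]
    _ ≤ R * ‖p‖ + ‖p‖ * R ^ 2 := by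
        gcongr
        · exact norm_fst_le p
        · exact norm_snd_le p
    _ = (R + R ^ 2) * ‖p‖ := by ring

lemma abs_inner_sub_le {z x : E} {s M : ℝ} (hz : ‖z‖ ≤ R) (hs : |s| ≤ M) :
    |inner ℝ z x - s * ‖z‖ ^ 2| ≤ M * R ^ 2 + R * ‖x‖ := by
  calc |inner ℝ z x - s * ‖z‖ ^ 2| ≤ |inner ℝ z x| + |s * ‖z‖ ^ 2| := abs_sub _ _
    _ ≤ ‖z‖ * ‖x‖ + |s| * ‖z‖ ^ 2 := by
        rw [abs_mul, abs_of_nonneg (sq_nonneg ‖z‖)]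
        gcongr
        exact abs_real_inner_le_norm z x
    _ ≤ R * ‖x‖ + M * R ^ 2 := by
        have hM : 0 ≤ M := (abs_nonneg s).trans hs
        gcongr
    _ = M * R ^ 2 + R * ‖x‖ := add_comm _ _

variable [MeasurableSpace E] [BorelSpace E] [SecondCountableTopology E] {μ : Measure E}

lemma aestronglyMeasurable_laplaceExponent : AEStronglyMeasurable (laplaceExponent (E := E)) μ :=
  -- Instance search misses this for product spaces.
  have : TopologicalSpace.PseudoMetrizableSpace (E × ℝ →L[ℝ] ℝ) :=
    @PseudoEMetricSpace.pseudoMetrizableSpace (E × ℝ →L[ℝ] ℝ) inferInstance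
  continuous_laplaceExponent.aestronglyMeasurable

lemma integrable_laplaceMoment (hq : Integrable q μ) (hR : ∀ᵐ z ∂μ, ‖z‖ ≤ R) (x : E) (s : ℝ) :
    Integrable (fun z => q z * rexp (inner ℝ z x - s * ‖z‖ ^ 2)) μ := by
  simpa only [laplaceExponent_apply] using integrable_mul_exp_apply hq
    aestronglyMeasurable_laplaceExponent (hR.mono fun z => norm_laplaceExponent_le) (x, s)

lemma hasFDerivAt_laplaceMoment (hq : Integrable q μ) (hR : ∀ᵐ z ∂μ, ‖z‖ ≤ R) (p : E × ℝ) :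
    HasFDerivAt (fun p : E × ℝ => laplaceMoment μ q p.1 p.2)
      (∫ z, (q z * rexp (laplaceExponent z p)) • laplaceExponent z ∂μ) p := by
  refine (hasFDerivAt_integral_mul_exp_apply hq aestronglyMeasurable_laplaceExponent
    (hR.mono fun z => norm_laplaceExponent_le) p).congr_of_eventuallyEq (.of_forall fun p => ?_)
  simp only [laplaceMoment, ← laplaceExponent_apply]

lemma fderiv_laplaceMoment_apply (hq : Integrable q μ) (hR : ∀ᵐ z ∂μ, ‖z‖ ≤ R) (p v : E × ℝ) :
    (∫ z, (q z * rexp (laplaceExponent z p)) • laplaceExponent z ∂μ) v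
      = laplaceMoment μ (fun z => laplaceExponent z v * q z) p.1 p.2 := by
  rw [ContinuousLinearMap.integral_apply (integrable_mul_exp_apply_smul hq
    aestronglyMeasurable_laplaceExponent (hR.mono fun z => norm_laplaceExponent_le) p)]
  refine integral_congr_ae (ae_of_all _ fun z => ?_)
  simp only [smul_apply, smul_eq_mul, ← laplaceExponent_apply]
  ring

lemma hasDerivAt_laplaceMoment (hq : Integrable q μ) (hR : ∀ᵐ z ∂μ, ‖z‖ ≤ R) (x : E) (s : ℝ) :
    HasDerivAt (laplaceMoment μ q x) (laplaceMoment μ (fun z => -‖z‖ ^ 2 * q z) x s) s := by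
  have h := (hasFDerivAt_laplaceMoment hq hR (x, s)).comp_hasDerivAt s
    ((hasDerivAt_const s x).prodMk (hasDerivAt_id s))
  rw [fderiv_laplaceMoment_apply hq hR] at h
  simp only [laplaceExponent_apply, inner_zero_right, zero_sub, one_mul] at h
  exact h

lemma hasFDerivAt_laplaceMoment_left (hq : Integrable q μ) (hR : ∀ᵐ z ∂μ, ‖z‖ ≤ R) (x : E)
    (s : ℝ) : HasFDerivAt (fun x => laplaceMoment μ q x s)
      ((∫ z, (q z * rexp (laplaceExponent z (x, s))) • laplaceExponent z ∂μ) ∘L .inl ℝ E ℝ) x :=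
  (hasFDerivAt_laplaceMoment hq hR (x, s)).comp x (f := fun x => (x, s))
    (hasFDerivAt_prodMk_left x s)

lemma differentiable_laplaceMoment (hq : Integrable q μ) (hR : ∀ᵐ z ∂μ, ‖z‖ ≤ R) (s : ℝ) :
    Differentiable ℝ fun x => laplaceMoment μ q x s :=
  fun x => (hasFDerivAt_laplaceMoment_left hq hR x s).differentiableAt

lemma fderiv_laplaceMoment (hq : Integrable q μ) (hR : ∀ᵐ z ∂μ, ‖z‖ ≤ R) (x v : E) (s : ℝ) :
    fderiv ℝ (fun x => laplaceMoment μ q x s) x v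
      = laplaceMoment μ (fun z => inner ℝ z v * q z) x s := by
  rw [(hasFDerivAt_laplaceMoment_left hq hR x s).fderiv, ContinuousLinearMap.comp_apply,
    fderiv_laplaceMoment_apply hq hR]
  simp [laplaceExponent_apply]

lemma hasExpGrowth_laplaceMoment (hq : Integrable q μ) (hR : ∀ᵐ z ∂μ, ‖z‖ ≤ R) :
    HasExpGrowth (laplaceMoment μ q) := by
  refine HasExpGrowth.of_bound (fun s => (differentiable_laplaceMoment hq hR s).continuous) fun M =>
    ⟨(∫ z, |q z| ∂μ) * rexp (M * R ^ 2), R, fun x s hs => ?_⟩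
  calc |laplaceMoment μ q x s| ≤ ∫ z, |q z| * rexp (M * R ^ 2 + R * ‖x‖) ∂μ := by
        rw [← norm_eq_abs, laplaceMoment]
        refine norm_integral_le_of_norm_le (hq.abs.mul_const _) (hR.mono fun z hz => ?_)
        rw [norm_mul, norm_eq_abs, norm_eq_abs, abs_exp]
        gcongr
        exact (le_abs_self _).trans (abs_inner_sub_le hz hs)
    _ = (∫ z, |q z| ∂μ) * rexp (M * R ^ 2) * rexp (R * ‖x‖) := by
        rw [integral_mul_const, Real.exp_add, mul_assoc]

variable [IsFiniteMeasure μ]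

lemma le_laplaceMoment_one (hR : ∀ᵐ z ∂μ, ‖z‖ ≤ R) {x : E} {s M : ℝ} (hs : |s| ≤ M) :
    μ.real univ * rexp (-(M * R ^ 2 + R * ‖x‖)) ≤ laplaceMoment μ 1 x s := by
  calc μ.real univ * rexp (-(M * R ^ 2 + R * ‖x‖))
      = ∫ _, rexp (-(M * R ^ 2 + R * ‖x‖)) ∂μ := by rw [integral_const, smul_eq_mul]
    _ ≤ laplaceMoment μ 1 x s := by
        refine integral_mono_ae (integrable_const _)
          (integrable_laplaceMoment (integrable_const 1) hR x s) (hR.mono fun z hz => ?_)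
        simpa using neg_le_of_abs_le (abs_inner_sub_le hz hs)

variable [NeZero μ]

lemma laplaceMoment_one_pos (hR : ∀ᵐ z ∂μ, ‖z‖ ≤ R) (x : E) (s : ℝ) :
    0 < laplaceMoment μ 1 x s := by
  have hmass : 0 < μ.real univ := measureReal_univ_pos
  exact (by positivity : (0 : ℝ) < _).trans_le (le_laplaceMoment_one hR le_rfl)

lemma hasExpGrowth_inv_laplaceMoment_one (hR : ∀ᵐ z ∂μ, ‖z‖ ≤ R) :
    HasExpGrowth (laplaceMoment μ 1)⁻¹ := by
  have hpos := laplaceMoment_one_pos hR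
  have hmass : 0 < μ.real univ := measureReal_univ_pos
  refine .of_bound (fun s =>
    (differentiable_laplaceMoment (integrable_const 1) hR s).continuous.inv₀
      fun x => (hpos x s).ne') fun M => ⟨(μ.real univ)⁻¹ * rexp (M * R ^ 2), R, fun x s hs => ?_⟩
  calc |(laplaceMoment μ 1)⁻¹ x s| = (laplaceMoment μ 1 x s)⁻¹ := abs_of_pos (inv_pos.2 (hpos x s))
    _ ≤ (μ.real univ * rexp (-(M * R ^ 2 + R * ‖x‖)))⁻¹ :=
        inv_anti₀ (by positivity) (le_laplaceMoment_one hR hs)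
    _ = (μ.real univ)⁻¹ * rexp (M * R ^ 2) * rexp (R * ‖x‖) := by
        rw [mul_inv, ← Real.exp_neg, neg_neg, Real.exp_add, mul_assoc]

end LaplaceMoment

section Caloric

variable {n : ℕ} {μ : Measure (EuclideanSpace ℝ (Fin n))} {q : EuclideanSpace ℝ (Fin n) → ℝ}
  {R : ℝ}

lemma spaceDeriv_laplaceMoment (hq : Integrable q μ) (hR : ∀ᵐ z ∂μ, ‖z‖ ≤ R) (k : Fin n) :
    spaceDeriv k (laplaceMoment μ q) = laplaceMoment μ (fun z => z k * q z) := by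
  funext x s
  rw [spaceDeriv, pdv, fderiv_laplaceMoment hq hR]
  simp [EuclideanSpace.inner_single_right]

lemma timeDeriv_laplaceMoment (hq : Integrable q μ) (hR : ∀ᵐ z ∂μ, ‖z‖ ≤ R) :
    timeDeriv (laplaceMoment μ q) = laplaceMoment μ (fun z => -‖z‖ ^ 2 * q z) :=
  funext₂ fun x s => (hasDerivAt_laplaceMoment hq hR x s).deriv

lemma integrable_coord_mul (hq : Integrable q μ) (hR : ∀ᵐ z ∂μ, ‖z‖ ≤ R) (k : Fin n) :
    Integrable (fun z => z k * q z) μ :=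
  hq.bdd_mul (by fun_prop) (hR.mono fun z hz => (PiLp.norm_apply_le z k).trans hz)

lemma integrable_neg_norm_sq_mul (hq : Integrable q μ) (hR : ∀ᵐ z ∂μ, ‖z‖ ≤ R) :
    Integrable (fun z => -‖z‖ ^ 2 * q z) μ :=
  hq.bdd_mul (c := R ^ 2) (by fun_prop) (hR.mono fun z hz => by
    rw [norm_neg, norm_pow, norm_norm]; gcongr)

lemma hasExpGrowthGrad_laplaceMoment (hq : Integrable q μ) (hR : ∀ᵐ z ∂μ, ‖z‖ ≤ R) :
    HasExpGrowthGrad (laplaceMoment μ q) :=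
  .of_spaceDeriv_eq (hasExpGrowth_laplaceMoment hq hR) (differentiable_laplaceMoment hq hR)
    (spaceDeriv_laplaceMoment hq hR) fun k =>
      hasExpGrowth_laplaceMoment (integrable_coord_mul hq hR k) hR

lemma backwardHeat_laplaceMoment (hq : Integrable q μ) (hR : ∀ᵐ z ∂μ, ‖z‖ ≤ R) :
    backwardHeat (laplaceMoment μ q) = 0 := by
  have hk (k : Fin n) := integrable_coord_mul hq hR k
  have hkk (k : Fin n) := integrable_coord_mul (hk k) hR k
  funext x s
  simp only [backwardHeat, timeDeriv_laplaceMoment hq hR, spaceDeriv_laplaceMoment hq hR,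
    spaceDeriv_laplaceMoment (hk _) hR, Pi.add_apply, Finset.sum_apply, laplaceMoment]
  rw [← integral_finsetSum _ fun k _ => integrable_laplaceMoment (hkk k) hR x s,
    ← integral_add (integrable_laplaceMoment (integrable_neg_norm_sq_mul hq hR) hR x s)
      (integrable_finsetSum _ fun k _ => integrable_laplaceMoment (hkk k) hR x s)]
  refine integral_eq_zero_of_ae (ae_of_all _ fun z => ?_)
  simp only [← Finset.sum_mul, ← mul_assoc, ← pow_two, ← EuclideanSpace.real_norm_sq_eq,
    Pi.zero_apply]
  ring

lemma isBackwardCaloric_laplaceMoment (hq : Integrable q μ) (hR : ∀ᵐ z ∂μ, ‖z‖ ≤ R) :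
    IsBackwardCaloric (laplaceMoment μ q) :=
  ⟨.of_deriv_eq (hasExpGrowthGrad_laplaceMoment hq hR) (spaceDeriv_laplaceMoment hq hR)
    (fun k => hasExpGrowthGrad_laplaceMoment (integrable_coord_mul hq hR k) hR)
    (fun x s => (hasDerivAt_laplaceMoment hq hR x s).differentiableAt)
    (timeDeriv_laplaceMoment hq hR)
    (hasExpGrowth_laplaceMoment (integrable_neg_norm_sq_mul hq hR) hR),
    backwardHeat_laplaceMoment hq hR⟩

lemma isBackwardCaloric_spaceDeriv_laplaceMoment (hq : Integrable q μ)
    (hR : ∀ᵐ z ∂μ, ‖z‖ ≤ R) (k : Fin n) :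
    IsBackwardCaloric (spaceDeriv k (laplaceMoment μ q)) :=
  spaceDeriv_laplaceMoment hq hR k ▸
    isBackwardCaloric_laplaceMoment (integrable_coord_mul hq hR k) hR

end Caloric

section SelfSimilar

variable {n : ℕ} {t t₀ : ℝ}

lemma heatK_eq_heatK_zero_mul_exp (y z : EuclideanSpace ℝ (Fin n)) (ht : 0 < t) :
    heatK n y z t
      = heatK n y 0 t * rexp (inner ℝ z ((2 * t)⁻¹ • y) - 1 / (4 * t) * ‖z‖ ^ 2) := by
  have hexponent : -‖y - z‖ ^ 2 / (4 * t) = -‖y - 0‖ ^ 2 / (4 * t)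
      + (inner ℝ z ((2 * t)⁻¹ • y) - 1 / (4 * t) * ‖z‖ ^ 2) := by
    rw [sub_zero, norm_sub_sq_real, inner_smul_right, real_inner_comm]
    field
  rw [heatK, hexponent, Real.exp_add, ← mul_assoc, heatK]

lemma integral_heatK_eq_heatK_zero_mul (μ : Measure (EuclideanSpace ℝ (Fin n)))
    (y : EuclideanSpace ℝ (Fin n)) (ht : 0 < t) :
    ∫ z, heatK n y z t ∂μ
      = heatK n y 0 t * laplaceMoment μ 1 ((2 * t)⁻¹ • y) (1 / (4 * t)) := by
  rw [laplaceMoment, ← integral_const_mul]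
  refine integral_congr_ae (ae_of_all _ fun z => ?_)
  simpa using heatK_eq_heatK_zero_mul_exp y z ht

lemma heatK_prefactor_mul (ht : 0 < t) (htt₀ : t < t₀) :
    (4 * π * t) ^ (-(n : ℝ) / 2) * (4 * π * (t₀ - t)) ^ (-(n : ℝ) / 2)
      = (4 * π * t₀) ^ (-(n : ℝ) / 2) * ((2 * t) ^ n)⁻¹
        * (4 * π * (1 / (4 * t) - 1 / (4 * t₀))) ^ (-(n : ℝ) / 2) := by
  have ht₀ : 0 < t₀ := ht.trans htt₀
  have hτ : 0 < t₀ - t := sub_pos.2 htt₀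
  have hr : 1 / (4 * t) - 1 / (4 * t₀) = (t₀ - t) / (4 * t * t₀) := by field
  have hpow : ((2 * t) ^ n)⁻¹ = ((2 * t) ^ 2) ^ (-(n : ℝ) / 2) := by
    rw [← rpow_natCast (2 * t) 2, ← rpow_mul (by positivity), ← rpow_natCast,
      ← rpow_neg (by positivity)]
    congr 1; push_cast; ring
  rw [hpow, hr, ← mul_rpow (by positivity) (by positivity),
    ← mul_rpow (by positivity) (by positivity), ← mul_rpow (by positivity) (by positivity)]
  congr 1
  field

lemma heatK_exponent_add (x₀ y : EuclideanSpace ℝ (Fin n)) (ht : 0 < t) (htt₀ : t < t₀) :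
    -‖y‖ ^ 2 / (4 * t) + -‖x₀ - y‖ ^ 2 / (4 * (t₀ - t)) = -‖x₀‖ ^ 2 / (4 * t₀)
      + -‖(2 * t)⁻¹ • y - (2 * t₀)⁻¹ • x₀‖ ^ 2 / (4 * (1 / (4 * t) - 1 / (4 * t₀))) := by
  have ht₀ : 0 < t₀ := ht.trans htt₀
  have hτ : 0 < t₀ - t := sub_pos.2 htt₀
  have hr : 1 / (4 * t) - 1 / (4 * t₀) = (t₀ - t) / (4 * t * t₀) := by field
  rw [hr, norm_sub_sq_real, norm_sub_sq_real, real_inner_smul_left, inner_smul_right, norm_smul,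
    norm_smul, real_inner_comm y x₀, norm_of_nonneg (by positivity), norm_of_nonneg (by positivity)]
  field

lemma heatK_zero_mul_heatK (x₀ y : EuclideanSpace ℝ (Fin n)) (ht : 0 < t) (htt₀ : t < t₀) :
    heatK n y 0 t * heatK n x₀ y (t₀ - t) = heatK n x₀ 0 t₀ * (((2 * t) ^ n)⁻¹
      * heatK n ((2 * t)⁻¹ • y) ((2 * t₀)⁻¹ • x₀) (1 / (4 * t) - 1 / (4 * t₀))) := by
  simp only [heatK, sub_zero]
  calc _ = (4 * π * t) ^ (-(n : ℝ) / 2) * (4 * π * (t₀ - t)) ^ (-(n : ℝ) / 2)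
        * rexp (-‖y‖ ^ 2 / (4 * t) + -‖x₀ - y‖ ^ 2 / (4 * (t₀ - t))) := by
        rw [Real.exp_add]; ring
    _ = _ := by
        rw [heatK_prefactor_mul ht htt₀, heatK_exponent_add x₀ y ht htt₀, Real.exp_add]; ring

theorem integral_comp_smul_mul_heatK_zero_mul_heatK (g : EuclideanSpace ℝ (Fin n) → ℝ)
    (x₀ : EuclideanSpace ℝ (Fin n)) (ht : 0 < t) (htt₀ : t < t₀) :
    ∫ y, g ((2 * t)⁻¹ • y) * (heatK n y 0 t * heatK n x₀ y (t₀ - t))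
      = heatK n x₀ 0 t₀
        * ∫ x, g x * heatK n x ((2 * t₀)⁻¹ • x₀) (1 / (4 * t) - 1 / (4 * t₀)) := by
  have hsubst := Measure.integral_comp_smul volume (fun x => g x
    * heatK n x ((2 * t₀)⁻¹ • x₀) (1 / (4 * t) - 1 / (4 * t₀))) (2 * t)⁻¹
  rw [finrank_euclideanSpace_fin, inv_pow, inv_inv, abs_of_pos (by positivity), smul_eq_mul,
    ← inv_mul_eq_iff_eq_mul₀ (by positivity)] at hsubst
  rw [← hsubst, ← integral_const_mul, ← integral_const_mul]
  refine integral_congr_ae (ae_of_all _ fun y => ?_)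
  simp only [heatK_zero_mul_heatK x₀ y ht htt₀]
  ring

end SelfSimilar

/-- The potential `f` of `u = (4πt)^{-n/2} e^{-f}` in terms of the function
`φ = log h` of the self-similar variable `y / (2t)`, where
`u(y, t) = (4πt)^{-n/2} exp(-‖y‖²/(4t)) h(y / (2t))`. -/
noncomputable def selfSimilarPotential {n : ℕ} (φ : EuclideanSpace ℝ (Fin n) → ℝ) (t : ℝ)
    (y : EuclideanSpace ℝ (Fin n)) : ℝ :=
  ‖y‖ ^ 2 / (4 * t) - φ ((2 * t)⁻¹ • y)

section Potential

variable {n : ℕ} {φ : EuclideanSpace ℝ (Fin n) → ℝ} {t : ℝ}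

lemma pdv_selfSimilarPotential (hφ : Differentiable ℝ φ) (t : ℝ) (j : Fin n)
    (y : EuclideanSpace ℝ (Fin n)) :
    pdv j (selfSimilarPotential φ t) y = (2 * t)⁻¹ * (y j - pdv j φ ((2 * t)⁻¹ • y)) := by
  have hnorm : DifferentiableAt ℝ (fun y : EuclideanSpace ℝ (Fin n) => ‖y‖ ^ 2) y :=
    differentiable_id.norm_sq ℝ y
  have hpdv_norm : pdv j (fun y => ‖y‖ ^ 2) y = 2 * y j := by
    simpa using pdv_norm_sub_sq (x := y) (k := j) 0
  have hcomp : DifferentiableAt ℝ (fun y => φ ((2 * t)⁻¹ • y)) y := by fun_prop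
  unfold selfSimilarPotential
  simp only [div_eq_inv_mul]
  rw [pdv_sub (hnorm.const_mul _) hcomp, pdv_const_mul hnorm, hpdv_norm, pdv_comp_smul]
  ring

lemma hess_selfSimilarPotential (hφ : Differentiable ℝ φ)
    (hφ' : ∀ j, Differentiable ℝ (pdv j φ)) (t : ℝ) (i j : Fin n)
    (y : EuclideanSpace ℝ (Fin n)) :
    hess i j (selfSimilarPotential φ t) y
      = (2 * t)⁻¹ * (if i = j then 1 else 0) - (2 * t)⁻¹ ^ 2 * hess i j φ ((2 * t)⁻¹ • y) := by
  have hcomp : DifferentiableAt ℝ (fun y => pdv j φ ((2 * t)⁻¹ • y)) y := by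
    fun_prop
  have hcoord : DifferentiableAt ℝ (fun y : EuclideanSpace ℝ (Fin n) => y j) y := by fun_prop
  rw [hess, funext (pdv_selfSimilarPotential hφ t j), pdv_const_mul (hcoord.fun_sub hcomp),
    pdv_sub hcoord hcomp, pdv_coord, pdv_comp_smul, hess]
  simp only [eq_comm (a := i)]
  ring

lemma sum_hess_selfSimilarPotential_sub_sq (hφ : Differentiable ℝ φ)
    (hφ' : ∀ j, Differentiable ℝ (pdv j φ)) (t : ℝ) (y : EuclideanSpace ℝ (Fin n)) :
    ∑ i, ∑ j, (hess i j (selfSimilarPotential φ t) y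
        - (1 / (2 * t)) * (if i = j then 1 else 0)) ^ 2
      = (2 * t)⁻¹ ^ 4 * ∑ i, ∑ j, hess i j φ ((2 * t)⁻¹ • y) ^ 2 := by
  simp only [hess_selfSimilarPotential hφ hφ', Finset.mul_sum]
  exact Finset.sum_congr rfl fun i _ => Finset.sum_congr rfl fun j _ => by ring

lemma lap_selfSimilarPotential (hφ : Differentiable ℝ φ)
    (hφ' : ∀ j, Differentiable ℝ (pdv j φ)) (t : ℝ) (y : EuclideanSpace ℝ (Fin n)) :
    lap (selfSimilarPotential φ t) y
      = n * (2 * t)⁻¹ - (2 * t)⁻¹ ^ 2 * lap φ ((2 * t)⁻¹ • y) := by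
  simp only [lap, hess_selfSimilarPotential hφ hφ', if_true, Finset.sum_sub_distrib,
    ← Finset.mul_sum, mul_one, Finset.sum_const, Finset.card_univ, Fintype.card_fin, nsmul_eq_mul]

lemma norm_gradient_selfSimilarPotential_sq (hφ : Differentiable ℝ φ) (t : ℝ)
    (y : EuclideanSpace ℝ (Fin n)) :
    ‖gradient (selfSimilarPotential φ t) y‖ ^ 2
      = (2 * t)⁻¹ ^ 2 * (‖y‖ ^ 2 - 2 * ∑ j, y j * pdv j φ ((2 * t)⁻¹ • y)
        + ‖gradient φ ((2 * t)⁻¹ • y)‖ ^ 2) := by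
  simp only [norm_gradient_sq, pdv_selfSimilarPotential hφ, EuclideanSpace.real_norm_sq_eq y,
    Finset.mul_sum, ← Finset.sum_sub_distrib, ← Finset.sum_add_distrib]
  exact Finset.sum_congr rfl fun j _ => by ring

lemma neg_entropy_selfSimilarPotential (hφ : Differentiable ℝ φ)
    (hφ' : ∀ j, Differentiable ℝ (pdv j φ)) (ht : t ≠ 0) (y : EuclideanSpace ℝ (Fin n)) :
    -(t * (2 * lap (selfSimilarPotential φ t) y - ‖gradient (selfSimilarPotential φ t) y‖ ^ 2)
      + selfSimilarPotential φ t y - n)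
      = 1 / (4 * t) * (2 * lap φ ((2 * t)⁻¹ • y) + ‖gradient φ ((2 * t)⁻¹ • y)‖ ^ 2)
        - ∑ j, ((2 * t)⁻¹ • y) j * pdv j φ ((2 * t)⁻¹ • y) + φ ((2 * t)⁻¹ • y) := by
  rw [lap_selfSimilarPotential hφ hφ', norm_gradient_selfSimilarPotential_sq hφ,
    selfSimilarPotential]
  simp only [PiLp.smul_apply, smul_eq_mul, mul_assoc (2 * t)⁻¹, ← Finset.mul_sum]
  field

end Potential

namespace HeatRegular

variable {n : ℕ} {h : EuclideanSpace ℝ (Fin n) → ℝ → ℝ}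

lemma differentiable_pdv (hh : HeatRegular h) (j : Fin n) (s : ℝ) :
    Differentiable ℝ (pdv j fun x => h x s) :=
  (hh.hasExpGrowthGrad_spaceDeriv j).differentiable s

end HeatRegular

namespace IsBackwardCaloric

variable {n : ℕ} {h : EuclideanSpace ℝ (Fin n) → ℝ → ℝ} {t t₀ : ℝ}

theorem hasDerivAt_integral_entropyDensity_mul_heatK (hh : IsBackwardCaloric h)
    (hinv : HasExpGrowth h⁻¹) (hgrad : ∀ j, IsBackwardCaloric (spaceDeriv j h))
    (hhess : ∀ j, IsBackwardCaloric (spaceDeriv j (spaceDeriv j h))) (hpos : ∀ x s, 0 < h x s)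
    (x₀ : EuclideanSpace ℝ (Fin n)) (ht : 0 < t) (htt₀ : t < t₀) :
    HasDerivAt (fun t => ∫ x, entropyDensity h x (1 / (4 * t))
        * heatK n x x₀ (1 / (4 * t) - 1 / (4 * t₀)))
      (1 / (8 * t ^ 3) * ∫ x, (∑ i, ∑ j, hess i j (fun y => Real.log (h y (1 / (4 * t)))) x ^ 2)
        * h x (1 / (4 * t)) * heatK n x x₀ (1 / (4 * t) - 1 / (4 * t₀))) t := by
  have hr : 0 < 1 / (4 * t) - 1 / (4 * t₀) :=
    sub_pos.2 (one_div_lt_one_div_of_lt (by positivity) (by linarith))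
  have htime : HasDerivAt (fun t => 1 / (4 * t) - 1 / (4 * t₀)) (-1 / (4 * t ^ 2)) t := by
    simp only [one_div]
    exact ((((hasDerivAt_id' t).const_mul 4).fun_inv (by positivity)).sub_const _).congr_deriv
      (by field)
  have hderiv := ((hh.heatRegular_entropyDensity hinv hgrad hhess hpos)
    |>.hasDerivAt_integral_mul_heatK (1 / (4 * t₀)) x₀ hr).comp t htime
  simp only [Function.comp_def, add_sub_cancel,
    hh.backwardHeat_entropyDensity hinv hgrad hhess hpos] at hderiv
  refine hderiv.congr_deriv ?_
  rw [← integral_mul_const, ← integral_const_mul]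
  refine integral_congr_ae (ae_of_all _ fun x => ?_)
  field

end IsBackwardCaloric

section SelfSimilarEntropy

variable {n : ℕ} {t t₀ : ℝ}

theorem integral_neg_entropy_mul_heatK {h : EuclideanSpace ℝ (Fin n) → ℝ → ℝ}
    (hlog : HeatRegular fun x s => Real.log (h x s)) {φ : EuclideanSpace ℝ (Fin n) → ℝ}
    (hφ : φ = fun x => Real.log (h x (1 / (4 * t)))) (x₀ : EuclideanSpace ℝ (Fin n))
    (ht : 0 < t) (htt₀ : t < t₀) :
    ∫ y, -(t * (2 * lap (selfSimilarPotential φ t) y - ‖gradient (selfSimilarPotential φ t) y‖ ^ 2)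
          + selfSimilarPotential φ t y - n)
        * (heatK n y 0 t * h ((2 * t)⁻¹ • y) (1 / (4 * t))) * heatK n x₀ y (t₀ - t)
      = heatK n x₀ 0 t₀ * ∫ x, entropyDensity h x (1 / (4 * t))
        * heatK n x ((2 * t₀)⁻¹ • x₀) (1 / (4 * t) - 1 / (4 * t₀)) := by
  subst hφ
  rw [← integral_comp_smul_mul_heatK_zero_mul_heatK _ x₀ ht htt₀]
  refine integral_congr_ae (ae_of_all _ fun y => ?_)
  simp only [neg_entropy_selfSimilarPotential (hlog.differentiable _)
    (hlog.differentiable_pdv · _) ht.ne', entropyDensity]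
  ring

theorem integral_sum_hess_sub_sq_mul_heatK {φ w : EuclideanSpace ℝ (Fin n) → ℝ}
    (hφ : Differentiable ℝ φ) (hφ' : ∀ j, Differentiable ℝ (pdv j φ))
    (x₀ : EuclideanSpace ℝ (Fin n)) (ht : 0 < t) (htt₀ : t < t₀) :
    2 * t * ∫ y, (∑ i, ∑ j, (hess i j (selfSimilarPotential φ t) y
          - (1 / (2 * t)) * (if i = j then 1 else 0)) ^ 2)
        * (heatK n y 0 t * w ((2 * t)⁻¹ • y)) * heatK n x₀ y (t₀ - t)
      = heatK n x₀ 0 t₀ * (1 / (8 * t ^ 3) * ∫ x, (∑ i, ∑ j, hess i j φ x ^ 2) * w x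
          * heatK n x ((2 * t₀)⁻¹ • x₀) (1 / (4 * t) - 1 / (4 * t₀))) := by
  rw [mul_left_comm (heatK n x₀ 0 t₀), ← integral_comp_smul_mul_heatK_zero_mul_heatK
    (fun x => (∑ i, ∑ j, hess i j φ x ^ 2) * w x) x₀ ht htt₀, ← integral_const_mul,
    ← integral_const_mul]
  refine integral_congr_ae (ae_of_all _ fun y => ?_)
  simp only [sum_hess_selfSimilarPotential_sub_sq hφ hφ']
  field

end SelfSimilarEntropy

section HeatEvolution

variable {n : ℕ} {μ : Measure (EuclideanSpace ℝ (Fin n))} [IsFiniteMeasure μ] [NeZero μ]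
  {R t t₀ : ℝ}

lemma neg_log_integral_heatK_sub (hR : ∀ᵐ z ∂μ, ‖z‖ ≤ R) (y : EuclideanSpace ℝ (Fin n))
    (ht : 0 < t) :
    -Real.log (∫ z, heatK n y z t ∂μ) - (n / 2 : ℝ) * Real.log (4 * π * t)
      = selfSimilarPotential (fun x => Real.log (laplaceMoment μ 1 x (1 / (4 * t)))) t y := by
  have hpow : (4 * π * t) ^ (-(n : ℝ) / 2) ≠ 0 := by positivity
  have hexp : rexp (-‖y‖ ^ 2 / (4 * t)) ≠ 0 := by positivity
  rw [integral_heatK_eq_heatK_zero_mul μ y ht, heatK, sub_zero,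
    Real.log_mul (by positivity) (laplaceMoment_one_pos hR _ _).ne', Real.log_mul hpow hexp,
    Real.log_exp, Real.log_rpow (by positivity), selfSimilarPotential]
  ring

lemma heatRegular_log_laplaceMoment_one (hR : ∀ᵐ z ∂μ, ‖z‖ ≤ R) :
    HeatRegular fun x s => Real.log (laplaceMoment μ 1 x s) :=
  (isBackwardCaloric_laplaceMoment (integrable_const 1) hR).log
    (hasExpGrowth_inv_laplaceMoment_one hR) (laplaceMoment_one_pos hR)

theorem hasDerivAt_integral_entropyDensity_laplaceMoment (hR : ∀ᵐ z ∂μ, ‖z‖ ≤ R)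
    (x₀ : EuclideanSpace ℝ (Fin n)) (ht : 0 < t) (htt₀ : t < t₀) :
    HasDerivAt (fun t => ∫ x, entropyDensity (laplaceMoment μ 1) x (1 / (4 * t))
        * heatK n x x₀ (1 / (4 * t) - 1 / (4 * t₀)))
      (1 / (8 * t ^ 3) * ∫ x,
        (∑ i, ∑ j, hess i j (fun y => Real.log (laplaceMoment μ 1 y (1 / (4 * t)))) x ^ 2)
          * laplaceMoment μ 1 x (1 / (4 * t)) * heatK n x x₀ (1 / (4 * t) - 1 / (4 * t₀))) t := by
  have hone : Integrable (1 : EuclideanSpace ℝ (Fin n) → ℝ) μ := integrable_const 1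
  refine (isBackwardCaloric_laplaceMoment hone hR).hasDerivAt_integral_entropyDensity_mul_heatK
    (hasExpGrowth_inv_laplaceMoment_one hR) (isBackwardCaloric_spaceDeriv_laplaceMoment hone hR)
    (fun j => ?_) (laplaceMoment_one_pos hR) x₀ ht htt₀
  rw [spaceDeriv_laplaceMoment hone hR]
  exact isBackwardCaloric_spaceDeriv_laplaceMoment (integrable_coord_mul hone hR j) hR j

end HeatEvolution

section Density

variable {E : Type*} [MeasurableSpace E] {μ : Measure E} {g : E → ℝ}

lemma integral_withDensity_ofReal (hg : Measurable g) (hnn : ∀ z, 0 ≤ g z) (k : E → ℝ) :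
    ∫ z, k z ∂μ.withDensity (fun z => ENNReal.ofReal (g z)) = ∫ z, k z * g z ∂μ := by
  rw [integral_withDensity_eq_integral_toReal_smul (by fun_prop) (by simp)]
  simp only [ENNReal.toReal_ofReal (hnn _), smul_eq_mul, mul_comm]

lemma exists_ae_norm_le_withDensity_ofReal [NormedAddCommGroup E]
    (hg : Measurable g) (hsupp : HasCompactSupport g) :
    ∃ R, ∀ᵐ z ∂μ.withDensity fun z => ENNReal.ofReal (g z), ‖z‖ ≤ R := by
  obtain ⟨R, hR⟩ := hsupp.isBounded.exists_norm_le
  refine ⟨R, (ae_withDensity_iff (by fun_prop)).2 (ae_of_all _ fun z hz => hR z ?_)⟩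
  exact subset_tsupport g fun h => hz (by simp [h])

variable [NormedAddCommGroup E] [BorelSpace E]

lemma isFiniteMeasure_withDensity_ofReal_of_hasCompactSupport [IsFiniteMeasureOnCompacts μ]
    (hg : Continuous g) (hsupp : HasCompactSupport g) :
    IsFiniteMeasure (μ.withDensity fun z => ENNReal.ofReal (g z)) :=
  isFiniteMeasure_withDensity_ofReal (hg.integrable_of_hasCompactSupport hsupp).2

lemma neZero_withDensity_ofReal [μ.IsOpenPosMeasure] (hg : Continuous g) (hnn : ∀ z, 0 ≤ g z)
    (hne : ∃ z, g z ≠ 0) : NeZero (μ.withDensity fun z => ENNReal.ofReal (g z)) := by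
  refine ⟨fun h => ?_⟩
  rw [withDensity_eq_zero_iff (by fun_prop)] at h
  obtain ⟨z, hz⟩ := hne
  have hzero : g =ᵐ[μ] 0 := h.mono fun z hz => (ENNReal.ofReal_eq_zero.1 hz).antisymm (hnn z)
  exact hz (congrFun ((hg.ae_eq_iff_eq μ continuous_const).1 hzero) z)

end Density

theorem stmt10_general (n : ℕ) (μ : Measure (EuclideanSpace ℝ (Fin n))) [IsFiniteMeasure μ]
    [NeZero μ] (R : ℝ) (hR : ∀ᵐ z ∂μ, ‖z‖ ≤ R)
    (u : EuclideanSpace ℝ (Fin n) → ℝ → ℝ)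
    (hu : ∀ y t, u y t = ∫ z, heatK n y z t ∂μ)
    (f : EuclideanSpace ℝ (Fin n) → ℝ → ℝ)
    (hf : ∀ y t, f y t = -Real.log (u y t) - (n / 2 : ℝ) * Real.log (4 * π * t))
    (W : EuclideanSpace ℝ (Fin n) → ℝ → ℝ)
    (hW : ∀ y t, W y t
      = t * (2 * lap (fun z => f z t) y - ‖gradient (fun z => f z t) y‖ ^ 2)
        + f y t - n)
    (x₀ : EuclideanSpace ℝ (Fin n)) (t₀ : ℝ)
    (hatH : EuclideanSpace ℝ (Fin n) → ℝ → ℝ)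
    (hhatH : ∀ y t, hatH y t
      = (4 * π * (t₀ - t)) ^ (-(n : ℝ) / 2)
          * Real.exp (-‖x₀ - y‖ ^ 2 / (4 * (t₀ - t))))
    (F D : ℝ → ℝ)
    (hF : ∀ t, F t = ∫ y, (-W y t) * u y t * hatH y t)
    (hD : ∀ t, D t = 2 * t * ∫ y,
      (∑ i, ∑ j, (hess i j (fun z => f z t) y
          - (1 / (2 * t)) * (if i = j then 1 else 0)) ^ 2)
        * u y t * hatH y t) :
    ∀ t ∈ Set.Ioo (0 : ℝ) t₀, HasDerivAt F (D t) t ∧ 0 ≤ D t := by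
  have hlog := heatRegular_log_laplaceMoment_one hR
  have hu' (y) {t : ℝ} (ht : 0 < t) := (hu y t).trans (integral_heatK_eq_heatK_zero_mul μ y ht)
  have hf' {t : ℝ} (ht : 0 < t) (y) : f y t
      = selfSimilarPotential (fun x => Real.log (laplaceMoment μ 1 x (1 / (4 * t)))) t y := by
    rw [hf, hu, neg_log_integral_heatK_sub hR y ht]
  have hhatH' (y t) : hatH y t = heatK n x₀ y (t₀ - t) := hhatH y t
  have hF' {t : ℝ} (ht : t ∈ Ioo 0 t₀) := calc
    F t = _ := by simp only [hF, hW, hf' ht.1, hu' _ ht.1, hhatH']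
    _ = _ := integral_neg_entropy_mul_heatK hlog rfl x₀ ht.1 ht.2
  have hD' {t : ℝ} (ht : t ∈ Ioo 0 t₀) := calc
    D t = _ := by simp only [hD, hf' ht.1, hu' _ ht.1, hhatH']
    _ = _ := integral_sum_hess_sub_sq_mul_heatK (w := (laplaceMoment μ 1 · (1 / (4 * t))))
      (hlog.differentiable (1 / (4 * t))) (hlog.differentiable_pdv · _) x₀ ht.1 ht.2
  refine fun t ht => ⟨?_, ?_⟩
  · rw [hD' ht]
    exact ((hasDerivAt_integral_entropyDensity_laplaceMoment hR _ ht.1 ht.2).const_mul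
      _).congr_of_eventuallyEq (eventually_of_mem (Ioo_mem_nhds ht.1 ht.2) fun t => hF')
  · have hu_nonneg (y) : 0 ≤ u y t := hu y t ▸ integral_nonneg fun z => heatK_nonneg ht.1.le
    have hatH_nonneg (y) : 0 ≤ hatH y t := hhatH' y t ▸ heatK_nonneg (sub_nonneg.2 ht.2.le)
    rw [hD]
    exact mul_nonneg (mul_nonneg zero_le_two ht.1.le) (integral_nonneg fun y =>
      mul_nonneg (mul_nonneg (by positivity) (hu_nonneg y)) (hatH_nonneg y))

/-- Flat-space weighted entropy monotonicity (the linear analogue of Perelman's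
estimate `v_H ≤ 0` from Section 4 of the paper):
`d/dt ∫ (-W) u Ĥ dy = 2t ∫ ‖∇²f - I/(2t)‖²_F u Ĥ dy ≥ 0`. -/
theorem stmt10 (n : ℕ) (hn : 1 ≤ n)
    (u₀ : EuclideanSpace ℝ (Fin n) → ℝ) (hc : Continuous u₀)
    (hsupp : HasCompactSupport u₀) (hnn : ∀ z, 0 ≤ u₀ z) (hne : ∃ z, u₀ z ≠ 0)
    (u : EuclideanSpace ℝ (Fin n) → ℝ → ℝ)
    (hu : ∀ y t, u y t = ∫ z, heatK n y z t * u₀ z)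
    (f : EuclideanSpace ℝ (Fin n) → ℝ → ℝ)
    (hf : ∀ y t, f y t = -Real.log (u y t) - (n / 2 : ℝ) * Real.log (4 * π * t))
    (W : EuclideanSpace ℝ (Fin n) → ℝ → ℝ)
    (hW : ∀ y t, W y t
      = t * (2 * lap (fun z => f z t) y - ‖gradient (fun z => f z t) y‖ ^ 2)
        + f y t - n)
    (x₀ : EuclideanSpace ℝ (Fin n)) (t₀ : ℝ) (ht₀ : 0 < t₀)
    (hatH : EuclideanSpace ℝ (Fin n) → ℝ → ℝ)
    (hhatH : ∀ y t, hatH y t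
      = (4 * π * (t₀ - t)) ^ (-(n : ℝ) / 2)
          * Real.exp (-‖x₀ - y‖ ^ 2 / (4 * (t₀ - t))))
    (F D : ℝ → ℝ)
    (hF : ∀ t, F t = ∫ y, (-W y t) * u y t * hatH y t)
    (hD : ∀ t, D t = 2 * t * ∫ y,
      (∑ i, ∑ j, (hess i j (fun z => f z t) y
          - (1 / (2 * t)) * (if i = j then 1 else 0)) ^ 2)
        * u y t * hatH y t) :
    ∀ t ∈ Set.Ioo (0 : ℝ) t₀, HasDerivAt F (D t) t ∧ 0 ≤ D t := by
  have := isFiniteMeasure_withDensity_ofReal_of_hasCompactSupport (μ := volume) hc hsupp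
  have := neZero_withDensity_ofReal (μ := volume) hc hnn hne
  obtain ⟨R, hR⟩ := exists_ae_norm_le_withDensity_ofReal (μ := volume) hc.measurable hsupp
  have hu' (y t) := (hu y t).trans (integral_withDensity_ofReal hc.measurable hnn _).symm
  exact stmt10_general n _ R hR u hu' f hf W hW x₀ t₀ hatH hhatH F D hF hD
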